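/- Let 1 < p < ∞ and p* = p/(p−1). Assume (X, d, μ) is complete, μ is Borel-regular and doubling, and X supports a weak 1-Poincaré inequality. Let G ⊂ X be a domain with compact closure and E, F ⊂ G disjoint continua each containing at least two points. If mod_p Γ(E, F; G) = 0, then mod_{p*} Γ*(E, F; G) = ∞. -/

import Mathlib

open MeasureTheory Metric Set ENNReal NNReal Filter Topology

noncomputable section

variable {X : Type*}

/-- A measure is Borel-regular: every set is contained in a Borel set of the same measure. -/
def BorelRegular [MeasurableSpace X] (μ : Measure X) : Prop :=
  ∀ s : Set X, ∃ t : Set X, MeasurableSet t ∧ s ⊆ t ∧ μ t = μ s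

/-- μ is doubling with constant `Cμ`: `0 < μ(2B) ≤ Cμ μ(B) < ∞` for all balls. -/
def IsDoublingWith [PseudoMetricSpace X] [MeasurableSpace X] (μ : Measure X) (Cμ : ℝ) : Prop :=
  ∀ (x : X) (r : ℝ), 0 < r →
    0 < μ (ball x (2 * r)) ∧ μ (ball x (2 * r)) ≤ ENNReal.ofReal Cμ * μ (ball x r) ∧
      μ (ball x r) < ⊤

/-- `ρ` is an upper gradient of `u` on the set `V`: for every `L ≥ 0` and every
1-Lipschitz curve `γ : [0, L] → V`, `|u(γ L) − u(γ 0)| ≤ ∫₀^L ρ(γ t) dt`. -/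
def IsUpperGradientOn [PseudoMetricSpace X] (u : X → ℝ) (ρ : X → ℝ≥0∞) (V : Set X) : Prop :=
  ∀ L : ℝ, 0 ≤ L → ∀ γ : ℝ → X, LipschitzOnWith 1 γ (Icc 0 L) → MapsTo γ (Icc 0 L) V →
    ENNReal.ofReal |u (γ L) - u (γ 0)| ≤ ∫⁻ t in Icc 0 L, ρ (γ t)

/-- `X` supports a weak `p`-Poincaré inequality with constants `CP`, `lP`. -/
def WeakPoincare [PseudoMetricSpace X] [MeasurableSpace X] (μ : Measure X)
    (p CP lP : ℝ) : Prop :=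
  ∀ u : X → ℝ, LocallyIntegrable u μ →
    ∀ ρ : X → ℝ≥0∞, Measurable ρ → IsUpperGradientOn u ρ univ →
    ∀ (x : X) (r : ℝ), 0 < r →
      ENNReal.ofReal (⨍ y in ball x r, |u y - ⨍ z in ball x r, u z ∂μ| ∂μ) ≤
        ENNReal.ofReal (CP * diam (ball x r)) *
          (⨍⁻ y in ball x (lP * r), ρ y ^ p ∂μ) ^ (1 / p)

/-- `X` is Ahlfors `Q`-regular with constants `0 < a ≤ A`. -/
def AhlforsRegular [PseudoMetricSpace X] [MeasurableSpace X] (μ : Measure X)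
    (Q a A : ℝ) : Prop :=
  0 < a ∧ a ≤ A ∧ ∀ (x : X) (r : ℝ), 0 < r → ENNReal.ofReal r < EMetric.diam (univ : Set X) →
    ENNReal.ofReal (a * r ^ Q) ≤ μ (ball x r) ∧ μ (ball x r) ≤ ENNReal.ofReal (A * r ^ Q)

/-- `ρ` is admissible for a family `M` of Borel measures: `∫ ρ dν ≥ 1` for all `ν ∈ M`. -/
def Admissible [MeasurableSpace X] (M : Set (Measure X)) (ρ : X → ℝ≥0∞) : Prop :=
  Measurable ρ ∧ ∀ ν ∈ M, 1 ≤ ∫⁻ x, ρ x ∂ν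

/-- The `q`-modulus of a family of Borel measures. -/
def modulus [MeasurableSpace X] (μ : Measure X) (q : ℝ) (M : Set (Measure X)) : ℝ≥0∞ :=
  ⨅ (ρ : X → ℝ≥0∞) (_ : Admissible M ρ), ∫⁻ x, ρ x ^ q ∂μ

/-- `ρ` is `q`-weakly admissible for `M`. -/
def WeaklyAdmissible [MeasurableSpace X] (μ : Measure X) (q : ℝ) (M : Set (Measure X))
    (ρ : X → ℝ≥0∞) : Prop :=
  ∃ N ⊆ M, modulus μ q N = 0 ∧ Admissible (M \ N) ρ

/-- The family `Γ(E, F; G)` of measures `H¹` restricted to images of injective rectifiable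
curves joining `E` and `F` in `G`. -/
def pathFamily [MetricSpace X] [MeasurableSpace X] [BorelSpace X] (E F G : Set X) :
    Set (Measure X) :=
  {ν | ∃ γ : ℝ → X, ContinuousOn γ (Icc 0 1) ∧ InjOn γ (Icc 0 1) ∧
    eVariationOn γ (Icc 0 1) ≠ ⊤ ∧ MapsTo γ (Icc 0 1) G ∧ γ 0 ∈ E ∧ γ 1 ∈ F ∧
    ν = (μH[1]).restrict (γ '' Icc 0 1)}

/-- `S` separates `E` from `F` in `G`: they lie in different connected components of `G \ S`. -/
def SeparatesIn [TopologicalSpace X] (S E F G : Set X) : Prop :=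
  ∃ x ∈ G \ S, ∃ y ∈ G \ S,
    E ⊆ connectedComponentIn (G \ S) x ∧ F ⊆ connectedComponentIn (G \ S) y ∧
    connectedComponentIn (G \ S) x ≠ connectedComponentIn (G \ S) y

/-- The family `Γ*(E, F; G)` of measures `H^d` restricted to `S ∩ G`, where `S` ranges over
compact subsets of the closure of `G`, of finite `H^d`-measure in `G`, separating `E` and `F`. -/
def surfaceFamilyH [MetricSpace X] [MeasurableSpace X] [BorelSpace X] (d : ℝ)
    (E F G : Set X) : Set (Measure X) :=
  {ν | ∃ S : Set X, IsCompact S ∧ S ⊆ closure G ∧ μH[d] (S ∩ G) ≠ ⊤ ∧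
    SeparatesIn S E F G ∧ ν = (μH[d]).restrict (S ∩ G)}

/-- The codimension-1 spherical Hausdorff measure associated to `μ`. -/
def codimOneHausdorff [PseudoMetricSpace X] [MeasurableSpace X] (μ : Measure X)
    (A : Set X) : ℝ≥0∞ :=
  ⨆ (δ : ℝ) (_ : 0 < δ),
    ⨅ (c : ℕ → X) (r : ℕ → ℝ) (_ : A ⊆ ⋃ i, ball (c i) (r i))
      (_ : ∀ i, 0 < r i ∧ r i ≤ δ), ∑' i, μ (ball (c i) (r i)) / ENNReal.ofReal (r i)

/-- The integral `∫_A g d𝓗` of `g` over `A` against the codimension-1 spherical Hausdorff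
measure, defined by the layer-cake formula. -/
def codimIntegral [PseudoMetricSpace X] [MeasurableSpace X] (μ : Measure X) (A : Set X)
    (g : X → ℝ≥0∞) : ℝ≥0∞ :=
  ∫⁻ s in Ioi (0 : ℝ), codimOneHausdorff μ (A ∩ {x | ENNReal.ofReal s < g x})

/-- The collection of "surfaces" of `Γ*(E, F; G)`: compact subsets of the closure of `G` of
finite codimension-1 measure in `G` separating `E` and `F` in `G`. -/
def surfaceSets [PseudoMetricSpace X] [MeasurableSpace X] (μ : Measure X) (E F G : Set X) :
    Set (Set X) :=
  {S | IsCompact S ∧ S ⊆ closure G ∧ codimOneHausdorff μ (S ∩ G) ≠ ⊤ ∧ SeparatesIn S E F G}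

/-- The `q`-modulus of a family `𝒮` of surfaces, each equipped with the codimension-1
spherical Hausdorff measure restricted to `S ∩ G`. -/
def surfModulus [PseudoMetricSpace X] [MeasurableSpace X] (μ : Measure X) (q : ℝ)
    (𝒮 : Set (Set X)) (G : Set X) : ℝ≥0∞ :=
  ⨅ (ρ : X → ℝ≥0∞)
    (_ : Measurable ρ ∧ ∀ S ∈ 𝒮, 1 ≤ codimIntegral μ (S ∩ G) ρ),
    ∫⁻ x, ρ x ^ q ∂μ

/-- The upper Lebesgue integral of `f` over `s ⊆ ℝ`. -/
def upperIntegralOn (s : Set ℝ) (f : ℝ → ℝ≥0∞) : ℝ≥0∞ :=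
  ⨅ (ψ : ℝ → ℝ≥0∞) (_ : Measurable ψ ∧ ∀ t, f t ≤ ψ t), ∫⁻ t in s, ψ t

/-- The restricted Hardy–Littlewood maximal function `M_R w`. -/
def restrMaximal [PseudoMetricSpace X] [MeasurableSpace X] (μ : Measure X) (R : ℝ)
    (w : X → ℝ≥0∞) (x : X) : ℝ≥0∞ :=
  ⨆ (r : ℝ) (_ : 0 < r ∧ r ≤ R), ⨍⁻ y in ball x r, w y ∂μ

/-- `x` is a Lebesgue point of `v`. -/
def LebesguePoint [PseudoMetricSpace X] [MeasurableSpace X] (μ : Measure X) (v : X → ℝ)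
    (x : X) : Prop :=
  Tendsto (fun r : ℝ => ⨍ y in ball x r, |v y - v x| ∂μ) (𝓝[>] 0) (𝓝 0)

/-- `u` is locally Lipschitz on `G`. -/
def IsLocallyLipschitzOn [PseudoMetricSpace X] (u : X → ℝ) (G : Set X) : Prop :=
  ∀ x ∈ G, ∃ (K : ℝ≥0) (t : Set X), t ∈ 𝓝[G] x ∧ LipschitzOnWith K u t

/-- `X` is a geodesic metric space. -/
def IsGeodesicSpace (X : Type*) [MetricSpace X] : Prop :=
  ∀ x y : X, ∃ γ : ℝ → X, γ 0 = x ∧ γ (dist x y) = y ∧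
    ∀ s ∈ Icc (0 : ℝ) (dist x y), ∀ t ∈ Icc (0 : ℝ) (dist x y), dist (γ s) (γ t) = |s - t|

/-- `G` is a domain (open connected set) with compact closure. -/
def IsDomainWithCompactClosure [TopologicalSpace X] (G : Set X) : Prop :=
  IsOpen G ∧ IsConnected G ∧ IsCompact (closure G)

/-- `E` is a nondegenerate continuum: compact, connected, with at least two points. -/
def IsNondegContinuum [TopologicalSpace X] (E : Set X) : Prop :=
  IsCompact E ∧ IsConnected E ∧ E.Nontrivial

/-- The distance between two sets. -/
def setDist [PseudoMetricSpace X] (E F : Set X) : ℝ :=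
  sInf ((fun p : X × X => dist p.1 p.2) '' (E ×ˢ F))

/-- The `s`-dimensional Hausdorff content. -/
def hContent {Y : Type*} [EMetricSpace Y] (s : ℝ) (E : Set Y) : ℝ≥0∞ :=
  ⨅ (U : ℕ → Set Y) (_ : E ⊆ ⋃ i, U i), ∑' i, EMetric.diam (U i) ^ s

end

/-!
If the path modulus vanishes, Fuglede's lemma provides a lower semicontinuous `ρ ∈ L^p` with
infinite integral along every rectifiable curve in `G` from `E` to `F`. The set of points which
can be reached from `E` along curves of finite `ρ`-length is Borel, by Arzelà–Ascoli and Fatou,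
and curves of finite `ρ`-length neither enter nor leave it. Hence `ε ρ` is an upper gradient of its
indicator for every `ε > 0`, and the Poincaré inequality makes this set null or conull in `G`. So
from one of the two continua, `D`, almost no point of `G` can be reached, and adding `∞` on a null
set turns `ρ` into a lower semicontinuous `h ∈ L^p` with infinite integral along every nonconstant
curve in `G` that starts in `D`.

It follows that for every `ε > 0` there is a continuous `u`, equal to `0` on `D` and to `1` on the
other continuum, whose oscillation at small scales is controlled by `ε h`: truncate the
`ε h`-weighted distance from `D` along chains of sufficiently small step. An Eilenberg type
inequality, proved with Vitali coverings, and Hölder's inequality then give, for every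
`g ∈ L^{p/(p-1)}` and small `ε`, `∫₀¹ ∫_{G ∩ {u = t}} g d𝓗 dt ≤ C ε ∫_G h (g + 2) dμ < 1`. Some
level set `{u = t}`, which separates `E` from `F`, thus violates the admissibility of `g`.
-/

/-! ### Lipschitz curves -/

theorem exists_subseq_tendsto_of_asymptotically_lipschitz {X Y : Type*} [PseudoMetricSpace X]
    [PseudoMetricSpace Y] [TopologicalSpace.SeparableSpace Y] {V : Set X} (hV : IsCompact V)
    {γ : ℕ → Y → X} (hγV : ∀ k t, γ k t ∈ V) {K e : ℕ → ℝ} {K₀ : ℝ}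
    (hK : Tendsto K atTop (𝓝 K₀)) (he : Tendsto e atTop (𝓝 0))
    (hγ : ∀ k s t, dist (γ k s) (γ k t) ≤ K k * dist s t + e k) :
    ∃ σ : Y → X, ∃ φ : ℕ → ℕ, StrictMono φ ∧ (∀ t, σ t ∈ V) ∧
      (∀ t, Tendsto (fun k => γ (φ k) t) atTop (𝓝 (σ t))) ∧
      ∀ s t, dist (σ s) (σ t) ≤ K₀ * dist s t := by
  obtain ⟨D, hDc, hD⟩ := TopologicalSpace.exists_countable_dense Y
  have := hDc.to_subtype
  obtain ⟨a, -, φ, hφ, ha⟩ := (isCompact_univ_pi fun _ : D => hV).tendsto_subseq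
    (x := fun k (q : D) => γ k q) fun k q _ => hγV k q
  have hbound (s t : Y) :
      Tendsto (fun k => K (φ k) * dist s t + e (φ k)) atTop (𝓝 (K₀ * dist s t)) := by
    simpa [Function.comp_def] using ((hK.mul_const (dist s t)).add he).comp hφ.tendsto_atTop
  have hcauchy (t : Y) : CauchySeq fun k => γ (φ k) t := by
    refine Metric.cauchySeq_iff.2 fun ε hε => ?_
    obtain ⟨q, hq, hqD⟩ : ∃ q, K₀ * dist t q < ε / 3 ∧ q ∈ D :=
      hD.exists_mem_open (isOpen_lt (f := fun q => K₀ * dist t q) (by fun_prop) continuous_const)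
        ⟨t, by simpa using hε⟩ |>.imp fun _ h => h.symm
    have hclose : ∀ᶠ k in atTop, dist (γ (φ k) t) (γ (φ k) q) < ε / 3 :=
      ((hbound t q).eventually_lt_const hq).mono fun k hk => (hγ _ _ _).trans_lt hk
    obtain ⟨N, hN⟩ := eventually_atTop.1 hclose
    obtain ⟨M, hM⟩ := Metric.cauchySeq_iff.1
      ((tendsto_pi_nhds.1 ha ⟨q, hqD⟩).cauchySeq) (ε / 3) (by positivity)
    refine ⟨max N M, fun m hm n hn => ?_⟩
    calc dist (γ (φ m) t) (γ (φ n) t)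
        ≤ dist (γ (φ m) t) (γ (φ m) q) + dist (γ (φ m) q) (γ (φ n) q)
          + dist (γ (φ n) q) (γ (φ n) t) := dist_triangle4 _ _ _ _
      _ < ε / 3 + ε / 3 + ε / 3 := by
        gcongr
        · exact hN m (le_of_max_le_left hm)
        · exact hM m (le_of_max_le_right hm) n (le_of_max_le_right hn)
        · rw [dist_comm]
          exact hN n (le_of_max_le_left hn)
      _ = ε := add_thirds ε
  choose σ hσV hσ using fun t =>
    cauchySeq_tendsto_of_isComplete hV.isComplete (fun k => hγV (φ k) t) (hcauchy t)
  exact ⟨σ, φ, hφ, hσV, hσ, fun s t =>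
    le_of_tendsto_of_tendsto' ((hσ s).dist (hσ t)) (hbound s t) fun k => hγ _ _ _⟩

theorem lipschitzWith_ite_le {X : Type*} [PseudoMetricSpace X] {K : ℝ≥0} {f g : ℝ → X}
    (hf : LipschitzWith K f) (hg : LipschitzWith K g) {a : ℝ} (hfg : f a = g a) :
    LipschitzWith K fun t => if t ≤ a then f t else g t := by
  refine LipschitzWith.of_dist_le_mul fun s t => ?_
  wlog hst : s ≤ t generalizing s t
  · simpa only [dist_comm] using this t s (le_of_not_ge hst)
  by_cases ht : t ≤ a
  · simpa only [if_pos ht, if_pos (hst.trans ht)] using hf.dist_le_mul s t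
  by_cases hs : s ≤ a
  · simp only [if_pos hs, if_neg ht]
    calc dist (f s) (g t) ≤ dist (f s) (f a) + dist (g a) (g t) := hfg ▸ dist_triangle _ _ _
      _ ≤ K * dist s a + K * dist a t := add_le_add (hf.dist_le_mul _ _) (hg.dist_le_mul _ _)
      _ = K * dist s t := by
        rw [← mul_add, dist_add_dist_of_mem_segment]
        rw [segment_eq_Icc hst]
        exact ⟨hs, (lt_of_not_ge ht).le⟩
  · simpa only [if_neg hs, if_neg ht] using hg.dist_le_mul s t

theorem lipschitzWith_add_const_comp {X : Type*} [PseudoMetricSpace X] {K : ℝ≥0} {γ : ℝ → X}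
    (hγ : LipschitzWith K γ) (a : ℝ) : LipschitzWith K fun t => γ (t + a) :=
  LipschitzWith.of_dist_le_mul fun s t => by simpa using hγ.dist_le_mul (s + a) (t + a)

theorem lipschitzWith_comp_const_mul {X : Type*} [PseudoMetricSpace X] {K : ℝ≥0} {γ : ℝ → X}
    (hγ : LipschitzWith K γ) (c : ℝ≥0) : LipschitzWith (K * c) fun t => γ (c * t) :=
  LipschitzWith.of_dist_le_mul fun s t => by
    simpa [Real.dist_eq, ← mul_sub, abs_mul, mul_assoc] using hγ.dist_le_mul (c * s) (c * t)

theorem lipschitzWith_comp_projIcc {X : Type*} [PseudoMetricSpace X] {K : ℝ≥0} {γ : ℝ → X}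
    {a b : ℝ} (hab : a ≤ b) (hγ : LipschitzOnWith K γ (Icc a b)) :
    LipschitzWith K fun t => γ (projIcc a b hab t) := by
  simpa [Function.comp_def] using hγ.to_restrict.comp (LipschitzWith.projIcc hab)

/-- `σ` is a `K`-Lipschitz path inside `C`, parametrised by `[0, 1]`, from `x` to `y`. It is
extended to all of `ℝ` so that no restriction to `[0, 1]` has to be carried around. -/
structure IsLipschitzPathIn {X : Type*} [PseudoMetricSpace X] (K : ℝ≥0) (σ : ℝ → X) (C : Set X)
    (x y : X) : Prop where
  lipschitz : LipschitzWith K σ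
  mem : ∀ t, σ t ∈ C
  source : σ 0 = x
  target : σ 1 = y

section LipschitzPath

variable {X : Type*} [MetricSpace X] {C : Set X} {x y : X}

theorem exists_minimal_isLipschitzPathIn (hC : IsCompact C)
    (hne : ∃ K σ, IsLipschitzPathIn K σ C x y) :
    ∃ K σ, IsLipschitzPathIn K σ C x y ∧ ∀ K' σ', IsLipschitzPathIn K' σ' C x y → K ≤ K' := by
  let S : Set ℝ≥0 := {K | ∃ σ, IsLipschitzPathIn K σ C x y}
  have hS : BddBelow S := OrderBot.bddBelow S
  obtain ⟨K, -, hK, hKS⟩ := exists_seq_tendsto_sInf (S := S) hne hS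
  choose τ hτ using hKS
  obtain ⟨σ, φ, -, hσC, hσ, hσL⟩ := exists_subseq_tendsto_of_asymptotically_lipschitz hC
    (fun k => (hτ k).mem) (NNReal.tendsto_coe.2 hK) tendsto_const_nhds
    fun k s t => by simpa using (hτ k).lipschitz.dist_le_mul s t
  refine ⟨sInf S, σ, ⟨LipschitzWith.of_dist_le_mul hσL, hσC, ?_, ?_⟩,
    fun K' σ' h => csInf_le hS ⟨σ', h⟩⟩
  · exact tendsto_nhds_unique (hσ 0) (by simp [(hτ _).source])
  · exact tendsto_nhds_unique (hσ 1) (by simp [(hτ _).target])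

theorem IsLipschitzPathIn.exists_cut_loop {K : ℝ≥0} {σ : ℝ → X}
    (h : IsLipschitzPathIn K σ C x y) {s t : ℝ} (hs : 0 ≤ s) (hst : s < t) (ht : t ≤ 1)
    (heq : σ s = σ t) : ∃ K' σ', IsLipschitzPathIn K' σ' C x y ∧ K' = K * (1 - (t - s)) := by
  let c : ℝ≥0 := ⟨1 - (t - s), by linarith⟩
  let w : ℝ → X := fun r => if r ≤ s then σ r else σ (r + (t - s))
  have hw : LipschitzWith K w := lipschitzWith_ite_le h.lipschitz
    (lipschitzWith_add_const_comp h.lipschitz (t - s)) (by simpa using heq)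
  refine ⟨K * c, fun r => w (c * r), ⟨lipschitzWith_comp_const_mul hw c, fun r => ?_, ?_, ?_⟩, rfl⟩
  · simp only [w]
    split_ifs <;> exact h.mem _
  · simp [w, hs, h.source]
  · have hc : (c : ℝ) = 1 - (t - s) := rfl
    by_cases hcs : (c : ℝ) ≤ s
    · obtain rfl : t = 1 := by linarith
      simpa [w, hcs, h.target, hc] using heq.trans h.target
    · simp [w, hcs, ← h.target, show (c : ℝ) + (t - s) = 1 by simp [hc]]

theorem exists_injOn_isLipschitzPathIn (hC : IsCompact C) (hxy : x ≠ y)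
    (hne : ∃ K σ, IsLipschitzPathIn K σ C x y) :
    ∃ K σ, IsLipschitzPathIn K σ C x y ∧ InjOn σ (Icc 0 1) := by
  obtain ⟨K, σ, hσ, hmin⟩ := exists_minimal_isLipschitzPathIn hC hne
  have hK : 0 < K := by
    refine pos_of_ne_zero fun hK => hxy ?_
    simpa [hK, hσ.source, hσ.target] using hσ.lipschitz.dist_le_mul 0 1
  refine ⟨K, σ, hσ, fun s hs t ht heq => ?_⟩
  by_contra hst
  wlog hlt : s < t generalizing s t
  · exact this t ht s hs heq.symm (Ne.symm hst) (lt_of_le_of_ne (le_of_not_gt hlt) (Ne.symm hst))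
  obtain ⟨K', σ', hσ', hK'⟩ := hσ.exists_cut_loop hs.1 hlt ht.2 heq
  have hKK' : (K : ℝ) ≤ K * (1 - (t - s)) := hK' ▸ NNReal.coe_le_coe.2 (hmin K' σ' hσ')
  have : (0 : ℝ) < K := hK
  nlinarith

variable [MeasurableSpace X] [BorelSpace X]

theorem hausdorffMeasure_restrict_le_smul_map {K : ℝ≥0} {γ : ℝ → X} (hγ : LipschitzWith K γ)
    {A : Set X} {J : Set ℝ} (hA : A ⊆ γ '' J) :
    (μH[1] : Measure X).restrict A ≤ (K : ℝ≥0∞) • (volume.restrict J).map γ := by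
  have hγm : Measurable γ := hγ.continuous.measurable
  refine Measure.le_iff.2 fun B hB => ?_
  rw [Measure.restrict_apply hB, Measure.smul_apply, Measure.map_apply hγm hB,
    Measure.restrict_apply (hγm hB), smul_eq_mul]
  calc μH[1] (B ∩ A) ≤ μH[1] (γ '' (γ ⁻¹' B ∩ J)) := by
        rw [image_preimage_inter]
        gcongr
    _ ≤ (K : ℝ≥0∞) ^ (1 : ℝ) * μH[1] (γ ⁻¹' B ∩ J) :=
      hγ.hausdorffMeasure_image_le zero_le_one _
    _ = K * volume (γ ⁻¹' B ∩ J) := by rw [ENNReal.rpow_one, hausdorffMeasure_real]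

theorem exists_mem_pathFamily_lintegral_le {E F G : Set X} (hEF : Disjoint E F) {γ : ℝ → X}
    (hγ : LipschitzWith 1 γ) (hG : ∀ t, γ t ∈ G) {L : ℝ} (hL : 0 ≤ L) (h0 : γ 0 ∈ E)
    (h1 : γ L ∈ F) :
    ∃ ν ∈ pathFamily E F G, ∀ ρ : X → ℝ≥0∞, Measurable ρ →
      ∫⁻ x, ρ x ∂ν ≤ ∫⁻ t in Icc 0 L, ρ (γ t) := by
  have hpath : ∃ K σ, IsLipschitzPathIn K σ (γ '' Icc 0 L) (γ 0) (γ L) := by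
    refine ⟨_, _, lipschitzWith_comp_const_mul (lipschitzWith_comp_projIcc hL hγ.lipschitzOnWith)
      ⟨L, hL⟩, fun t => ⟨_, Subtype.prop _, rfl⟩, by simp, ?_⟩
    exact congrArg (fun s : Icc 0 L => γ s) ((congrArg _ (mul_one L)).trans (projIcc_right hL))
  obtain ⟨K, σ, hσ, hinj⟩ := exists_injOn_isLipschitzPathIn
    (isCompact_Icc.image hγ.continuous) (hEF.ne_of_mem h0 h1) hpath
  refine ⟨(μH[1]).restrict (σ '' Icc 0 1), ⟨σ, hσ.lipschitz.continuous.continuousOn, hinj, ?_,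
    fun t _ => ?_, hσ.source ▸ h0, hσ.target ▸ h1, rfl⟩, fun ρ hρ => ?_⟩
  · have hbv : BoundedVariationOn σ (Icc 0 1 ∩ Icc 0 1) :=
      hσ.lipschitz.lipschitzOnWith.locallyBoundedVariationOn 0 1 (by simp) (by simp)
    rwa [inter_self] at hbv
  · obtain ⟨s, -, hs⟩ := hσ.mem t
    exact hs ▸ hG s
  · calc ∫⁻ x, ρ x ∂(μH[1] : Measure X).restrict (σ '' Icc 0 1)
        ≤ ∫⁻ x, ρ x ∂((1 : ℝ≥0) : ℝ≥0∞) • (volume.restrict (Icc 0 L)).map γ :=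
          lintegral_mono' (hausdorffMeasure_restrict_le_smul_map hγ
            (image_subset_iff.2 fun t _ => hσ.mem t)) le_rfl
      _ = ∫⁻ t in Icc 0 L, ρ (γ t) := by
        rw [ENNReal.coe_one, one_smul, lintegral_map hρ hγ.continuous.measurable]

end LipschitzPath

/-! ### Reachability by curves of finite weighted length -/

theorem setLIntegral_Icc_comp_add_right (f : ℝ → ℝ≥0∞) (a b c : ℝ) :
    ∫⁻ t in Icc a b, f (t + c) = ∫⁻ t in Icc (a + c) (b + c), f t := by
  simpa using (measurePreserving_add_right volume c).setLIntegral_comp_preimage_emb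
    (measurableEmbedding_addRight c) f (Icc (a + c) (b + c))

theorem setLIntegral_Icc_comp_sub_left (f : ℝ → ℝ≥0∞) (a b c : ℝ) :
    ∫⁻ t in Icc a b, f (c - t) = ∫⁻ t in Icc (c - b) (c - a), f t := by
  simpa using (volume.measurePreserving_sub_left c).setLIntegral_comp_preimage_emb
    (MeasurableEquiv.subLeft c).measurableEmbedding f (Icc (c - b) (c - a))

theorem setLIntegral_Icc_comp_projIcc {a b : ℝ} (hab : a ≤ b) (f : ℝ → ℝ≥0∞) :
    ∫⁻ t in Icc a b, f (projIcc a b hab t) = ∫⁻ t in Icc a b, f t :=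
  setLIntegral_congr_fun measurableSet_Icc fun t ht => by simp only [projIcc_of_mem hab ht]

theorem setLIntegral_Icc_add_le (f : ℝ → ℝ≥0∞) {a b c : ℝ} (hab : a ≤ b) (hbc : b ≤ c) :
    ∫⁻ t in Icc a c, f t ≤ (∫⁻ t in Icc a b, f t) + ∫⁻ t in Icc b c, f t := by
  rw [← Icc_union_Icc_eq_Icc hab hbc]
  exact lintegral_union_le _ _ _

/-- `y` can be reached from `x` by a Lipschitz curve in `G` of finite `ρ`-length. By
reparametrisation it is enough to consider 1-Lipschitz curves on intervals `[0, L]`; they are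
extended to all of `ℝ`. -/
def ReachableWithin {X : Type*} [PseudoMetricSpace X] (G : Set X) (ρ : X → ℝ≥0∞) (x y : X) :
    Prop :=
  ∃ L, 0 ≤ L ∧ ∃ γ : ℝ → X, LipschitzWith 1 γ ∧ (∀ t, γ t ∈ G) ∧ γ 0 = x ∧ γ L = y ∧
    ∫⁻ t in Icc 0 L, ρ (γ t) ≠ ⊤

namespace ReachableWithin

variable {X : Type*} [PseudoMetricSpace X] {G : Set X} {ρ : X → ℝ≥0∞} {x y z : X}

theorem symm (h : ReachableWithin G ρ x y) : ReachableWithin G ρ y x := by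
  obtain ⟨L, hL, γ, hγ, hG, rfl, rfl, hfin⟩ := h
  refine ⟨L, hL, fun t => γ (L - t), ?_, fun t => hG _, by simp, by simp, ?_⟩
  · exact LipschitzWith.of_dist_le_mul fun s t => by
      simpa only [dist_sub_left] using hγ.dist_le_mul (L - s) (L - t)
  · rwa [setLIntegral_Icc_comp_sub_left fun t => ρ (γ t), sub_self, sub_zero]

theorem trans (hxy : ReachableWithin G ρ x y) (hyz : ReachableWithin G ρ y z) :
    ReachableWithin G ρ x z := by
  obtain ⟨L, hL, γ, hγ, hG, rfl, rfl, hfin⟩ := hxy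
  obtain ⟨L', hL', γ', hγ', hG', h0, rfl, hfin'⟩ := hyz
  let σ : ℝ → X := fun t => if t ≤ L then γ t else γ' (t + -L)
  have hσ : LipschitzWith 1 σ :=
    lipschitzWith_ite_le hγ (lipschitzWith_add_const_comp hγ' (-L)) (by simp [h0])
  have hσL {t : ℝ} (ht : L ≤ t) : σ t = γ' (t + -L) := by
    rcases ht.eq_or_lt with rfl | ht
    · simp [σ, h0]
    · simp [σ, ht.not_ge]
  refine ⟨L + L', by positivity, σ, hσ, fun t => ?_, by simp [σ, hL], by simp [hσL, hL'], ?_⟩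
  · simp only [σ]
    split_ifs <;> apply_assumption
  · refine ne_top_of_le_ne_top (ENNReal.add_ne_top.2 ⟨hfin, hfin'⟩) <|
      (setLIntegral_Icc_add_le _ hL (le_add_of_nonneg_right hL')).trans_eq ?_
    congr 1
    · exact setLIntegral_congr_fun measurableSet_Icc fun t ht => by simp [σ, ht.2]
    · rw [setLIntegral_congr_fun measurableSet_Icc fun t ht => by rw [hσL ht.1],
        setLIntegral_Icc_comp_add_right fun t => ρ (γ' t)]
      simp

theorem of_lipschitzOnWith {γ : ℝ → X} {L : ℝ} (hL : 0 ≤ L)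
    (hγ : LipschitzOnWith 1 γ (Icc 0 L)) (hG : MapsTo γ (Icc 0 L) G)
    (hfin : ∫⁻ t in Icc 0 L, ρ (γ t) ≠ ⊤) : ReachableWithin G ρ (γ 0) (γ L) := by
  refine ⟨L, hL, _, lipschitzWith_comp_projIcc hL hγ, fun t => hG (Subtype.prop _), by simp,
    by simp, ?_⟩
  rwa [setLIntegral_Icc_comp_projIcc hL fun t => ρ (γ t)]

end ReachableWithin

theorem exists_isCompact_exhaustion {X : Type*} [PseudoMetricSpace X] {G : Set X} (hG : IsOpen G)
    (hGc : IsCompact (closure G)) :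
    ∃ K : ℕ → Set X, (∀ n, IsCompact (K n)) ∧ (∀ n, K n ⊆ G) ∧
      ∀ C ⊆ G, IsCompact C → ∃ n, C ⊆ K n := by
  refine ⟨fun n => closure G ∩ (thickening (1 / (n + 1)) Gᶜ)ᶜ,
    fun n => hGc.inter_right isOpen_thickening.isClosed_compl, fun n x hx => ?_,
    fun C hCG hC => ?_⟩
  · exact not_not.1 fun hxG => hx.2 (self_subset_thickening (by positivity) _ hxG)
  · obtain ⟨δ, hδ, hδG⟩ := hC.exists_thickening_subset_open hG hCG
    obtain ⟨n, hn⟩ := exists_nat_one_div_lt hδ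
    refine ⟨n, fun x hx => ⟨subset_closure (hCG hx), fun hxn => ?_⟩⟩
    obtain ⟨y, hy, hxy⟩ := mem_thickening_iff.1 hxn
    exact hy (hδG (mem_thickening_iff.2 ⟨x, hx, by rw [dist_comm]; exact hxy.trans hn⟩))

theorem setLIntegral_Icc_comp_le_liminf {X : Type*} [TopologicalSpace X] [MeasurableSpace X]
    [BorelSpace X] {ρ : X → ℝ≥0∞} (hρ : LowerSemicontinuous ρ) {γ : ℕ → ℝ → X} {σ : ℝ → X}
    (hγ : ∀ k, Continuous (γ k)) (hσ : ∀ t, Tendsto (fun k => γ k t) atTop (𝓝 (σ t)))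
    {L : ℕ → ℝ} {L₀ : ℝ} (hL : Tendsto L atTop (𝓝 L₀)) :
    ∫⁻ t in Icc 0 L₀, ρ (σ t) ≤ liminf (fun k => ∫⁻ t in Icc 0 (L k), ρ (γ k t)) atTop := by
  simp_rw [← setLIntegral_congr Ico_ae_eq_Icc, ← lintegral_indicator measurableSet_Ico]
  refine le_trans (lintegral_mono fun t => ?_) (lintegral_liminf_le fun k =>
    (hρ.measurable.comp (hγ k).measurable).indicator measurableSet_Ico)
  by_cases ht : t ∈ Ico 0 L₀
  swap
  · rw [indicator_of_notMem ht]
    exact zero_le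
  rw [indicator_of_mem ht]
  calc ρ (σ t) ≤ liminf (fun k => ρ (γ k t)) atTop :=
        (hρ.le_liminf (σ t)).trans (liminf_le_liminf_of_le (hσ t))
    _ ≤ _ := liminf_le_liminf <| (hL.eventually_const_lt ht.2).mono fun k hk => by
        rw [indicator_of_mem (show t ∈ Ico 0 (L k) from ⟨ht.1, hk⟩)]

section MeasurableReachable

variable {X : Type*} [MetricSpace X] [MeasurableSpace X] [BorelSpace X] {ρ : X → ℝ≥0∞}
  {E G : Set X}

theorem isClosed_setOf_lintegral_curve_le (hρ : LowerSemicontinuous ρ) (hE : IsClosed E)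
    {V : Set X} (hV : IsCompact V) (m : ℝ) (l : ℝ≥0∞) :
    IsClosed {y | ∃ L ∈ Icc 0 m, ∃ γ : ℝ → X, LipschitzWith 1 γ ∧ (∀ t, γ t ∈ V) ∧ γ 0 ∈ E ∧
      γ L = y ∧ ∫⁻ t in Icc 0 L, ρ (γ t) ≤ l} := by
  refine IsSeqClosed.isClosed fun y y₀ hy hy₀ => ?_
  choose L hL γ hγ hγV hγ0 hγL hγl using hy
  obtain ⟨L₀, hL₀, φ, hφ, hLφ⟩ := isCompact_Icc.tendsto_subseq hL
  obtain ⟨σ, ψ, hψ, hσV, hσ, hσL⟩ := exists_subseq_tendsto_of_asymptotically_lipschitz hV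
    (fun k => hγV (φ k)) (tendsto_const_nhds (x := (1 : ℝ))) tendsto_const_nhds
    fun k s t => by simpa using (hγ (φ k)).dist_le_mul s t
  have hLψ : Tendsto (fun k => L (φ (ψ k))) atTop (𝓝 L₀) := hLφ.comp hψ.tendsto_atTop
  refine ⟨L₀, hL₀, σ, LipschitzWith.of_dist_le_mul hσL, hσV,
    hE.mem_of_tendsto (hσ 0) (.of_forall fun k => hγ0 _), ?_, ?_⟩
  · have hdist : Tendsto (fun k => dist (γ (φ (ψ k)) L₀) (y (φ (ψ k)))) atTop (𝓝 0) := by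
      refine squeeze_zero (fun _ => dist_nonneg) (fun k => ?_)
        (by simpa using (tendsto_const_nhds (x := L₀)).dist hLψ)
      simpa [hγL] using (hγ (φ (ψ k))).dist_le_mul L₀ (L (φ (ψ k)))
    exact tendsto_nhds_unique ((tendsto_iff_of_dist hdist).1 (hσ L₀))
      (hy₀.comp (hφ.comp hψ).tendsto_atTop)
  · calc ∫⁻ t in Icc 0 L₀, ρ (σ t)
        ≤ liminf (fun k => ∫⁻ t in Icc 0 (L (φ (ψ k))), ρ (γ (φ (ψ k)) t)) atTop :=
          setLIntegral_Icc_comp_le_liminf hρ (fun k => (hγ _).continuous) hσ hLψ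
      _ ≤ l := (liminf_le_liminf (.of_forall fun k => hγl (φ (ψ k)))).trans (by simp)

theorem measurableSet_reachableWithin (hρ : LowerSemicontinuous ρ) (hE : IsClosed E)
    (hG : IsOpen G) (hGc : IsCompact (closure G)) :
    MeasurableSet {y | ∃ x ∈ E, ReachableWithin G ρ x y} := by
  obtain ⟨K, hK, hKG, hGK⟩ := exists_isCompact_exhaustion hG hGc
  suffices h : {y | ∃ x ∈ E, ReachableWithin G ρ x y} =
      ⋃ (n : ℕ) (m : ℕ) (l : ℕ), {y | ∃ L ∈ Icc 0 (m : ℝ), ∃ γ : ℝ → X, LipschitzWith 1 γ ∧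
        (∀ t, γ t ∈ K n) ∧ γ 0 ∈ E ∧ γ L = y ∧ ∫⁻ t in Icc 0 L, ρ (γ t) ≤ l} by
    rw [h]
    exact .iUnion fun n => .iUnion fun m => .iUnion fun l =>
      (isClosed_setOf_lintegral_curve_le hρ hE (hK n) m l).measurableSet
  ext y
  simp only [mem_iUnion, mem_ofPred_eq]
  constructor
  · rintro ⟨x, hx, L, hL, γ, hγ, hγG, rfl, rfl, hfin⟩
    obtain ⟨n, hn⟩ := hGK _ (image_subset_iff.2 fun t _ => hγG t)
      (isCompact_Icc (a := 0) (b := L) |>.image hγ.continuous)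
    obtain ⟨m, hm⟩ := exists_nat_ge L
    obtain ⟨l, hl⟩ := ENNReal.exists_nat_gt hfin
    refine ⟨n, m, l, L, ⟨hL, hm⟩, _, lipschitzWith_comp_projIcc hL hγ.lipschitzOnWith,
      fun t => hn ⟨_, Subtype.prop _, rfl⟩, by simpa, by simp, ?_⟩
    exact (setLIntegral_Icc_comp_projIcc hL fun t => ρ (γ t)).trans_le hl.le
  · rintro ⟨n, m, l, L, hL, γ, hγ, hγK, h0, rfl, hl⟩
    exact ⟨γ 0, h0, L, hL.1, γ, hγ, fun t => hKG n (hγK t), rfl, rfl,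
      ne_top_of_le_ne_top (ENNReal.natCast_ne_top l) hl⟩

end MeasurableReachable

/-! ### Functions witnessing vanishing path modulus -/

section Fuglede

variable {X : Type*} [MeasurableSpace X] {μ : Measure X} {p : ℝ}

theorem exists_admissible_lintegral_rpow_le (hp : 0 < p) {M : Set (Measure X)}
    (hM : modulus μ p M = 0) {c : ℝ≥0∞} (hc0 : c ≠ 0) (hc : c ≠ ⊤) {ε : ℝ≥0∞} (hε : ε ≠ 0) :
    ∃ g : X → ℝ≥0∞, Measurable g ∧ ∫⁻ x, g x ^ p ∂μ ≤ ε ∧ ∀ ν ∈ M, c ≤ ∫⁻ x, g x ∂ν := by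
  have hcp : c ^ p ≠ ⊤ := ENNReal.rpow_ne_top_of_nonneg hp.le hc
  have hcp0 : c ^ p ≠ 0 := by simp [hc0, hc]
  have hlt : modulus μ p M < ε / c ^ p := hM ▸ ENNReal.div_pos hε hcp
  obtain ⟨r, ⟨hr, hrM⟩, hrε⟩ : ∃ r, Admissible M r ∧ ∫⁻ x, r x ^ p ∂μ < ε / c ^ p := by
    simpa only [modulus, iInf_lt_iff, exists_prop] using hlt
  refine ⟨fun x => c * r x, hr.const_mul c, ?_, fun ν hν => ?_⟩
  · calc ∫⁻ x, (c * r x) ^ p ∂μ = c ^ p * ∫⁻ x, r x ^ p ∂μ := by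
          simp_rw [ENNReal.mul_rpow_of_nonneg _ _ hp.le]
          exact lintegral_const_mul _ (hr.pow_const p)
      _ ≤ c ^ p * (ε / c ^ p) := by gcongr
      _ = ε := ENNReal.mul_div_cancel hcp0 hcp
  · rw [lintegral_const_mul _ hr]
    exact le_mul_of_one_le_right' (hrM ν hν)

theorem exists_lintegral_eq_top_of_modulus_eq_zero (hp : 0 < p) {M : Set (Measure X)}
    (hM : modulus μ p M = 0) :
    ∃ f : X → ℝ≥0∞, Measurable f ∧ ∫⁻ x, f x ^ p ∂μ ≠ ⊤ ∧ ∀ ν ∈ M, ∫⁻ x, f x ∂ν = ⊤ := by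
  obtain ⟨ε, hε, hεsum⟩ := ENNReal.exists_pos_sum_of_countable one_ne_zero ℕ
  choose g hg hgε hgM using fun n : ℕ => exists_admissible_lintegral_rpow_le hp hM
    (c := n + 1) (by simp) (by finiteness) (ENNReal.coe_ne_zero.2 (hε n).ne')
  refine ⟨fun x => ⨆ n, g n x, .iSup hg, ?_, fun ν hν => ?_⟩
  · refine ne_top_of_le_ne_top one_ne_top (le_trans ?_ hεsum.le)
    calc ∫⁻ x, (⨆ n, g n x) ^ p ∂μ = ∫⁻ x, ⨆ n, g n x ^ p ∂μ :=
          lintegral_congr fun x => (ENNReal.orderIsoRpow p hp).map_iSup _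
      _ ≤ ∫⁻ x, ∑' n, g n x ^ p ∂μ :=
          lintegral_mono fun x => iSup_le fun n => ENNReal.le_tsum n
      _ = ∑' n, ∫⁻ x, g n x ^ p ∂μ :=
          lintegral_tsum fun n => ((hg n).pow_const p).aemeasurable
      _ ≤ ∑' n, (ε n : ℝ≥0∞) := ENNReal.tsum_le_tsum hgε
  · refine ENNReal.eq_top_of_forall_nnreal_le fun r => ?_
    obtain ⟨n, hn⟩ := exists_nat_ge r
    calc (r : ℝ≥0∞) ≤ n + 1 := le_add_right (by exact_mod_cast hn)
      _ ≤ ∫⁻ x, g n x ∂ν := hgM n ν hν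
      _ ≤ ∫⁻ x, ⨆ n, g n x ∂ν := lintegral_mono fun x => le_iSup (g · x) n

theorem lintegral_rpow_ne_top_of_exponent_le [IsFiniteMeasure μ] {s : ℝ} (hs : 0 ≤ s)
    (hsp : s ≤ p) {f : X → ℝ≥0∞} (hf : ∫⁻ x, f x ^ p ∂μ ≠ ⊤) : ∫⁻ x, f x ^ s ∂μ ≠ ⊤ := by
  have hle (x : X) : f x ^ s ≤ 1 + f x ^ p := by
    rcases le_total (f x) 1 with h | h
    · exact (ENNReal.rpow_le_one h hs).trans le_self_add
    · exact (ENNReal.rpow_le_rpow_of_exponent_le h hsp).trans le_add_self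
  refine ne_top_of_le_ne_top ?_ (lintegral_mono hle)
  rw [lintegral_add_left measurable_const, lintegral_const, one_mul]
  exact ENNReal.add_ne_top.2 ⟨measure_ne_top _ _, hf⟩

end Fuglede

theorem exists_lowerSemicontinuous_ge_lintegral_rpow_ne_top {X : Type*} [TopologicalSpace X]
    [MeasurableSpace X] [BorelSpace X] {μ : Measure X} [μ.WeaklyRegular] [SigmaFinite μ] {p : ℝ}
    (hp : 0 < p) {f : X → ℝ≥0∞} (hf : Measurable f) (hfin : ∫⁻ x, f x ^ p ∂μ ≠ ⊤) :
    ∃ h : X → ℝ≥0∞, LowerSemicontinuous h ∧ f ≤ h ∧ ∫⁻ x, h x ^ p ∂μ ≠ ⊤ := by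
  obtain ⟨H, hfH, hH, hHint⟩ := exists_le_lowerSemicontinuous_lintegral_ge μ (fun x => f x ^ p)
    (hf.pow_const p) one_ne_zero
  refine ⟨fun x => H x ^ p⁻¹, ?_, fun x => (ENNReal.le_rpow_inv_iff hp).2 (hfH x), ?_⟩
  · exact ENNReal.continuous_rpow_const.comp_lowerSemicontinuous hH
      (ENNReal.monotone_rpow_of_nonneg (inv_nonneg.2 hp.le))
  · simp_rw [ENNReal.rpow_inv_rpow hp.ne']
    exact ne_top_of_le_ne_top (ENNReal.add_ne_top.2 ⟨hfin, one_ne_top⟩) hHint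

theorem exists_not_reachableWithin_of_modulus_eq_zero {X : Type*} [MetricSpace X]
    [MeasurableSpace X] [BorelSpace X] {μ : Measure X} {p : ℝ} (hp : 0 < p) {E F G : Set X}
    (hμG : μ G ≠ ⊤) (hEF : Disjoint E F) (hmod : modulus μ p (pathFamily E F G) = 0) :
    ∃ ρ : X → ℝ≥0∞, LowerSemicontinuous ρ ∧ ∫⁻ x in G, ρ x ^ p ∂μ ≠ ⊤ ∧
      ∀ x ∈ E, ∀ y ∈ F, ¬ ReachableWithin G ρ x y := by
  obtain ⟨f, hf, hfint, hfM⟩ := exists_lintegral_eq_top_of_modulus_eq_zero hp hmod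
  have : IsFiniteMeasure (μ.restrict G) := isFiniteMeasure_restrict.2 hμG
  obtain ⟨ρ, hρ, hfρ, hρint⟩ := exists_lowerSemicontinuous_ge_lintegral_rpow_ne_top
    (μ := μ.restrict G) hp hf (ne_top_of_le_ne_top hfint (setLIntegral_le_lintegral _ _))
  refine ⟨ρ, hρ, hρint, ?_⟩
  rintro x hx y hy ⟨L, hL, γ, hγ, hγG, rfl, rfl, hfin⟩
  obtain ⟨ν, hν, hνγ⟩ := exists_mem_pathFamily_lintegral_le hEF hγ hγG hL hx hy
  refine hfin (top_le_iff.1 ?_)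
  calc ⊤ = ∫⁻ x, f x ∂ν := (hfM ν hν).symm
    _ ≤ ∫⁻ x, ρ x ∂ν := lintegral_mono hfρ
    _ ≤ ∫⁻ t in Icc 0 L, ρ (γ t) := hνγ ρ hρ.measurable

/-! ### Saturated sets are null or conull -/

theorem setLIntegral_eq_top_of_mapsTo {X : Type*} {f : X → ℝ≥0∞} {γ : ℝ → X} {S : Set ℝ}
    (hS : MeasurableSet S) (hS0 : volume S ≠ 0) (h : ∀ t ∈ S, f (γ t) = ⊤) :
    ∫⁻ t in S, f (γ t) = ⊤ := by
  rw [setLIntegral_congr_fun hS h, setLIntegral_const, ENNReal.top_mul hS0]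

theorem mapsTo_closure_of_setLIntegral_ne_top {X : Type*} [TopologicalSpace X] {U : Set X}
    {f : X → ℝ≥0∞} (hf : ∀ x ∉ U, f x = ⊤) {γ : ℝ → X} {L : ℝ} (hL : 0 < L)
    (hγ : ContinuousOn γ (Icc 0 L)) (hfin : ∫⁻ t in Icc 0 L, f (γ t) ≠ ⊤) :
    MapsTo γ (Icc 0 L) (closure U) := by
  suffices h : MapsTo γ (Ioo 0 L) (closure U) by
    rw [← closure_Ioo hL.ne] at hγ ⊢
    simpa using h.closure_of_continuousOn hγ
  intro t₀ ht₀
  by_contra hout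
  have hO : IsOpen (Ioo 0 L ∩ γ ⁻¹' (closure U)ᶜ) :=
    (hγ.mono Ioo_subset_Icc_self).isOpen_inter_preimage isOpen_Ioo isClosed_closure.isOpen_compl
  refine hfin (top_le_iff.1 ?_)
  calc ⊤ = ∫⁻ t in Ioo 0 L ∩ γ ⁻¹' (closure U)ᶜ, f (γ t) :=
        (setLIntegral_eq_top_of_mapsTo hO.measurableSet (hO.measure_pos volume ⟨t₀, ht₀, hout⟩).ne'
          fun t ht => hf _ fun htU => ht.2 (subset_closure htU)).symm
    _ ≤ ∫⁻ t in Icc 0 L, f (γ t) :=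
        lintegral_mono_set (inter_subset_left.trans Ioo_subset_Icc_self)

theorem isUpperGradientOn_indicator_of_saturated {X : Type*} [PseudoMetricSpace X]
    {G A U : Set X} {ρ : X → ℝ≥0∞} (hUG : closure U ⊆ G)
    (hsat : ∀ x y, ReachableWithin G ρ x y → (x ∈ A ↔ y ∈ A)) {ε : ℝ≥0∞} (hε : ε ≠ 0) :
    IsUpperGradientOn (A.indicator fun _ => (1 : ℝ))
      (fun x => ε * ρ x + Uᶜ.indicator (fun _ => ⊤) x) univ := by
  intro L hL γ hγ _
  rcases hL.eq_or_lt with rfl | hL0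
  · simp
  by_cases hfin : ∫⁻ t in Icc 0 L, (ε * ρ (γ t) + Uᶜ.indicator (fun _ => ⊤) (γ t)) = ⊤
  · exact le_top.trans_eq hfin.symm
  have hmaps : MapsTo γ (Icc 0 L) G := (mapsTo_closure_of_setLIntegral_ne_top
    (f := fun x => ε * ρ x + Uᶜ.indicator (fun _ => ⊤) x) (fun x hx => by simp [hx]) hL0
    hγ.continuousOn hfin).mono_right hUG
  have hρfin : ∫⁻ t in Icc 0 L, ρ (γ t) ≠ ⊤ := by
    refine fun htop => hfin (top_le_iff.1 ?_)
    calc ⊤ = ε * ∫⁻ t in Icc 0 L, ρ (γ t) := by rw [htop, ENNReal.mul_top hε]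
      _ ≤ ∫⁻ t in Icc 0 L, ε * ρ (γ t) := lintegral_const_mul_le _ _
      _ ≤ _ := lintegral_mono fun t => le_self_add
  have hiff := hsat _ _ (.of_lipschitzOnWith hL hγ hmaps hρfin)
  by_cases h0 : γ 0 ∈ A
  · simp [h0, hiff.1 h0]
  · simp [h0, mt hiff.2 h0]

section Doubling

variable {X : Type*} [PseudoMetricSpace X] [MeasurableSpace X] {μ : Measure X} {Cμ : ℝ}

theorem IsDoublingWith.measure_ball_pos (hD : IsDoublingWith μ Cμ) (x : X) {r : ℝ} (hr : 0 < r) :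
    0 < μ (ball x r) := by
  simpa [mul_div_cancel₀] using (hD x (r / 2) (half_pos hr)).1

theorem IsDoublingWith.measure_ball_ne_top (hD : IsDoublingWith μ Cμ) (x : X) {r : ℝ}
    (hr : 0 < r) : μ (ball x r) ≠ ⊤ :=
  (hD x r hr).2.2.ne

theorem IsDoublingWith.isLocallyFiniteMeasure (hD : IsDoublingWith μ Cμ) :
    IsLocallyFiniteMeasure μ :=
  ⟨fun x => ⟨ball x 1, ball_mem_nhds x one_pos, (hD x 1 one_pos).2.2⟩⟩

theorem IsDoublingWith.isOpenPosMeasure (hD : IsDoublingWith μ Cμ) : μ.IsOpenPosMeasure where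
  open_pos U hU := by
    rintro ⟨x, hx⟩
    obtain ⟨r, hr, hrU⟩ := Metric.isOpen_iff.1 hU x hx
    exact ((hD.measure_ball_pos x hr).trans_le (measure_mono hrU)).ne'

end Doubling

theorem ae_eq_const_of_setAverage_abs_sub_eq_zero {X : Type*} [MeasurableSpace X] {μ : Measure X}
    {B : Set X} (hB : μ B ≠ ⊤) {v : X → ℝ} (hv : IntegrableOn v B μ) {c : ℝ}
    (h : ⨍ y in B, |v y - c| ∂μ = 0) : ∀ᵐ y ∂μ.restrict B, v y = c := by
  have : IsFiniteMeasure (μ.restrict B) := isFiniteMeasure_restrict.2 hB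
  rcases eq_or_ne (μ B) 0 with hB0 | hB0
  · simp [Measure.restrict_eq_zero.2 hB0]
  have hint : Integrable (fun y => |v y - c|) (μ.restrict B) := (hv.sub (integrable_const c)).abs
  rw [setAverage_eq, smul_eq_mul, mul_eq_zero_iff_left (inv_ne_zero
    ((measureReal_ne_zero_iff hB).2 hB0)), integral_eq_zero_iff_of_nonneg
    (fun y => abs_nonneg _) hint] at h
  filter_upwards [h] with y hy
  exact sub_eq_zero.1 (abs_eq_zero.1 hy)

theorem WeakPoincare.ae_eq_const {X : Type*} [PseudoMetricSpace X] [MeasurableSpace X]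
    [OpensMeasurableSpace X] {μ : Measure X} {s CP lP : ℝ} (hPI : WeakPoincare μ s CP lP)
    (hs : 0 < s) {x : X} {r : ℝ} (hr : 0 < r) (hB : μ (ball x r) ≠ ⊤) {v : X → ℝ}
    (hv : LocallyIntegrable v μ) (hvB : IntegrableOn v (ball x r) μ) {ρ : X → ℝ≥0∞}
    (hρ : Measurable ρ) (hρint : ⨍⁻ y in ball x (lP * r), ρ y ^ s ∂μ ≠ ⊤)
    (hug : ∀ ε : ℝ≥0∞, ε ≠ 0 → IsUpperGradientOn v
      (fun y => ε * ρ y + (ball x (lP * r))ᶜ.indicator (fun _ => ⊤) y) univ) :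
    ∃ c, ∀ᵐ y ∂μ.restrict (ball x r), v y = c := by
  let M := ENNReal.ofReal (CP * diam (ball x r)) * (⨍⁻ y in ball x (lP * r), ρ y ^ s ∂μ) ^ (1 / s)
  have hM : M ≠ ⊤ := ENNReal.mul_ne_top ofReal_ne_top
    (ENNReal.rpow_ne_top_of_nonneg (by positivity) hρint)
  have hle (n : ℕ) : ENNReal.ofReal (⨍ y in ball x r, |v y - ⨍ z in ball x r, v z ∂μ| ∂μ) ≤
      (n : ℝ≥0∞)⁻¹ * M := by
    have hn : (n : ℝ≥0∞)⁻¹ ≠ 0 := by simp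
    refine (hPI v hv _ ((hρ.const_mul _).add (measurable_const.indicator
      measurableSet_ball.compl)) (hug _ hn) x r hr).trans_eq ?_
    have hcongr : ⨍⁻ y in ball x (lP * r), ((n : ℝ≥0∞)⁻¹ * ρ y +
        (ball x (lP * r))ᶜ.indicator (fun _ => ⊤) y) ^ s ∂μ =
        ((n : ℝ≥0∞)⁻¹) ^ s * ⨍⁻ y in ball x (lP * r), ρ y ^ s ∂μ := by
      rw [setLAverage_eq, setLAverage_eq, ← mul_div_assoc,
        ← lintegral_const_mul _ (hρ.pow_const s)]
      congr 1
      refine setLIntegral_congr_fun measurableSet_ball fun y hy => ?_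
      simp [hy, ENNReal.mul_rpow_of_nonneg _ _ hs.le]
    simp only [Pi.add_apply, hcongr]
    rw [ENNReal.mul_rpow_of_nonneg _ _ (by positivity), ← ENNReal.rpow_mul,
      mul_one_div_cancel hs.ne', ENNReal.rpow_one, mul_left_comm]
  have hzero : ENNReal.ofReal (⨍ y in ball x r, |v y - ⨍ z in ball x r, v z ∂μ| ∂μ) ≤ 0 := by
    have hlim : Tendsto (fun n : ℕ => (n : ℝ≥0∞)⁻¹ * M) atTop (𝓝 0) := by
      simpa using ENNReal.Tendsto.mul_const ENNReal.tendsto_inv_nat_nhds_zero (Or.inr hM)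
    exact ge_of_tendsto' hlim hle
  refine ⟨_, ae_eq_const_of_setAverage_abs_sub_eq_zero hB hvB
    (le_antisymm (by simpa using hzero) ?_)⟩
  rw [setAverage_eq]
  exact smul_nonneg (by positivity) (integral_nonneg fun y => abs_nonneg _)

theorem exists_ball_null_or_conull_of_saturated {X : Type*} [PseudoMetricSpace X]
    [MeasurableSpace X] [BorelSpace X] {μ : Measure X} {Cμ : ℝ} (hD : IsDoublingWith μ Cμ)
    {s p CP lP : ℝ} (hPI : WeakPoincare μ s CP lP) (hlP : 0 < lP) (hs : 0 < s) (hsp : s ≤ p)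
    {G A : Set X} (hG : IsOpen G) (hA : MeasurableSet A) {ρ : X → ℝ≥0∞} (hρ : Measurable ρ)
    (hρint : ∫⁻ x in G, ρ x ^ p ∂μ ≠ ⊤)
    (hsat : ∀ x y, ReachableWithin G ρ x y → (x ∈ A ↔ y ∈ A)) {x : X} (hx : x ∈ G) :
    ∃ r > 0, μ.restrict A (ball x r) = 0 ∨ μ.restrict Aᶜ (ball x r) = 0 := by
  have := hD.isLocallyFiniteMeasure
  obtain ⟨R, hR, hRG⟩ := Metric.nhds_basis_closedBall.mem_iff.1 (hG.mem_nhds hx)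
  obtain ⟨r, hr, rfl⟩ : ∃ r > 0, lP * r = R := ⟨R / lP, by positivity, mul_div_cancel₀ _ hlP.ne'⟩
  have hBfin := hD.measure_ball_ne_top x hr
  have : IsFiniteMeasure (μ.restrict (ball x (lP * r))) :=
    isFiniteMeasure_restrict.2 (hD.measure_ball_ne_top x hR)
  have hint : ⨍⁻ y in ball x (lP * r), ρ y ^ s ∂μ ≠ ⊤ := by
    rw [setLAverage_eq]
    refine ENNReal.div_ne_top (lintegral_rpow_ne_top_of_exponent_le hs.le hsp ?_)
      (hD.measure_ball_pos x hR).ne'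
    exact ne_top_of_le_ne_top hρint (lintegral_mono_set (ball_subset_closedBall.trans hRG))
  obtain ⟨c, hc⟩ := hPI.ae_eq_const hs hr hBfin
    ((locallyIntegrable_const (1 : ℝ)).indicator hA)
    ((integrableOn_const hBfin).indicator hA) hρ hint fun ε hε =>
      isUpperGradientOn_indicator_of_saturated (closure_ball_subset_closedBall.trans hRG) hsat hε
  refine ⟨r, hr, ?_⟩
  simp only [Measure.restrict_apply measurableSet_ball, inter_comm (ball x r),
    ← Measure.restrict_apply hA, ← Measure.restrict_apply hA.compl]
  rcases eq_or_ne c 0 with rfl | hc0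
  · exact .inl <| measure_eq_zero_iff_ae_notMem.2 <| hc.mono fun y hy hyA => by simp [hyA] at hy
  · exact .inr <| measure_eq_zero_iff_ae_notMem.2 <| hc.mono fun y hy hyA =>
      hc0 (by rw [← hy, indicator_of_notMem hyA])

theorem measure_eq_zero_of_isSigmaCompact_subset_compl_support {X : Type*} [TopologicalSpace X]
    [MeasurableSpace X] {ν : Measure X} {G : Set X} (hG : IsSigmaCompact G)
    (h : G ⊆ ν.supportᶜ) : ν G = 0 := by
  obtain ⟨K, hK, rfl⟩ := hG
  exact measure_iUnion_null fun n => Measure.measure_eq_zero_of_isCompact_subset_compl_support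
    (hK n) ((subset_iUnion K n).trans h)

theorem measure_restrict_null_or_conull_of_isPreconnected {X : Type*} [TopologicalSpace X]
    [MeasurableSpace X] {μ : Measure X} [μ.IsOpenPosMeasure] {G A : Set X} (hG : IsPreconnected G)
    (hGσ : IsSigmaCompact G) (hA : MeasurableSet A)
    (hloc : ∀ x ∈ G, ∃ U ∈ 𝓝 x, μ.restrict A U = 0 ∨ μ.restrict Aᶜ U = 0) :
    μ.restrict A G = 0 ∨ μ.restrict Aᶜ G = 0 := by
  have hcover : G ⊆ (μ.restrict A).supportᶜ ∪ (μ.restrict Aᶜ).supportᶜ := fun x hx => by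
    simp only [mem_union, mem_compl_iff, Measure.notMem_support_iff_exists]
    obtain ⟨U, hU, h | h⟩ := hloc x hx
    exacts [.inl ⟨U, hU, h⟩, .inr ⟨U, hU, h⟩]
  have hdisj : G ∩ ((μ.restrict A).supportᶜ ∩ (μ.restrict Aᶜ).supportᶜ) = ∅ := by
    rw [← compl_union, ← Measure.support_add, Measure.restrict_add_restrict_compl hA,
      Measure.support_eq_univ, compl_univ, inter_empty]
  exact (isPreconnected_iff_subset_of_disjoint.1 hG _ _ Measure.isOpen_compl_support
    Measure.isOpen_compl_support hcover hdisj).imp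
    (measure_eq_zero_of_isSigmaCompact_subset_compl_support hGσ)
    (measure_eq_zero_of_isSigmaCompact_subset_compl_support hGσ)

/-! ### Polar weights -/

/-- `h` is a polar weight for `D` in `G`: it has infinite integral along every 1-Lipschitz curve
of positive length in `G` that starts in `D`. -/
def IsPolarWeight {X : Type*} [PseudoMetricSpace X] (h : X → ℝ≥0∞) (D G : Set X) : Prop :=
  ∀ γ : ℝ → X, LipschitzWith 1 γ → (∀ t, γ t ∈ G) → γ 0 ∈ D →
    ∀ T, 0 < T → ∫⁻ t in Icc 0 T, h (γ t) = ⊤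

section Polar

variable {X : Type*} [MetricSpace X] [MeasurableSpace X] [BorelSpace X] {μ : Measure X} {p : ℝ}
  {ρ : X → ℝ≥0∞}

theorem exists_isPolarWeight_of_null (hp : 0 < p) {G D N : Set X} (hμG : μ G ≠ ⊤)
    (hρ : Measurable ρ) (hρint : ∫⁻ x in G, ρ x ^ p ∂μ ≠ ⊤) (hN : MeasurableSet N)
    (hN0 : μ.restrict G N = 0) (hDN : ∀ x ∈ D, ∀ y, ReachableWithin G ρ x y → y ∈ N) :
    ∃ h : X → ℝ≥0∞, LowerSemicontinuous h ∧ ∫⁻ x in G, h x ^ p ∂μ ≠ ⊤ ∧ IsPolarWeight h D G := by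
  have : IsFiniteMeasure (μ.restrict G) := isFiniteMeasure_restrict.2 hμG
  have hint : ∫⁻ x in G, (ρ x + N.indicator (fun _ => ⊤) x) ^ p ∂μ ≠ ⊤ := by
    rwa [lintegral_congr_ae ((measure_eq_zero_iff_ae_notMem.1 hN0).mono fun x hx => by
      rw [indicator_of_notMem hx, add_zero])]
  obtain ⟨h, hlsc, hle, hhint⟩ := exists_lowerSemicontinuous_ge_lintegral_rpow_ne_top hp
    (hρ.add (measurable_const.indicator hN)) hint
  refine ⟨h, hlsc, hhint, fun γ hγ hγG h0 T hT => ?_⟩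
  by_cases hfin : ∫⁻ t in Icc 0 T, ρ (γ t) = ⊤
  · exact top_le_iff.1 (hfin ▸ lintegral_mono fun t => le_self_add.trans (hle (γ t)))
  · refine setLIntegral_eq_top_of_mapsTo measurableSet_Icc (by simpa using hT) fun t ht => ?_
    have hreach : ReachableWithin G ρ (γ 0) (γ t) := ⟨t, ht.1, γ, hγ, hγG, rfl, rfl,
      ne_top_of_le_ne_top hfin (lintegral_mono_set (Icc_subset_Icc_right ht.2))⟩
    exact top_le_iff.1 (le_trans (by simp [hDN _ h0 _ hreach]) (hle (γ t)))

theorem exists_isPolarWeight {Cμ : ℝ} (hD : IsDoublingWith μ Cμ) {s CP lP : ℝ}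
    (hPI : WeakPoincare μ s CP lP) (hlP : 0 < lP) (hs : 0 < s) (hsp : s ≤ p) {E F G : Set X}
    (hG : IsDomainWithCompactClosure G) (hμG : μ G ≠ ⊤) (hE : IsClosed E) (hEF : Disjoint E F)
    (hmod : modulus μ p (pathFamily E F G) = 0) :
    ∃ h : X → ℝ≥0∞, LowerSemicontinuous h ∧ ∫⁻ x in G, h x ^ p ∂μ ≠ ⊤ ∧
      (IsPolarWeight h E G ∨ IsPolarWeight h F G) := by
  have := hD.isOpenPosMeasure
  have hp := hs.trans_le hsp
  obtain ⟨hGo, hGconn, hGc⟩ := hG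
  obtain ⟨ρ, hρ, hρint, hno⟩ := exists_not_reachableWithin_of_modulus_eq_zero hp hμG hEF hmod
  let A : Set X := {y | ∃ x ∈ E, ReachableWithin G ρ x y}
  have hA : MeasurableSet A := measurableSet_reachableWithin hρ hE hGo hGc
  have hsat (x y : X) (hxy : ReachableWithin G ρ x y) : x ∈ A ↔ y ∈ A :=
    ⟨fun ⟨e, he, hex⟩ => ⟨e, he, hex.trans hxy⟩, fun ⟨e, he, hey⟩ => ⟨e, he, hey.trans hxy.symm⟩⟩
  obtain ⟨K, hK, hKG, hGK⟩ := exists_isCompact_exhaustion hGo hGc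
  have hGσ : IsSigmaCompact G := ⟨K, hK, (iUnion_subset hKG).antisymm fun x hx =>
    (hGK {x} (singleton_subset_iff.2 hx) isCompact_singleton).elim fun n hn =>
      mem_iUnion.2 ⟨n, hn rfl⟩⟩
  rcases measure_restrict_null_or_conull_of_isPreconnected hGconn.isPreconnected hGσ hA fun x hx =>
    (exists_ball_null_or_conull_of_saturated hD hPI hlP hs hsp hGo hA hρ.measurable hρint hsat
      hx).imp' (ball x) fun r ⟨hr, h⟩ => ⟨ball_mem_nhds x hr, h⟩ with h0 | h0
  · rw [Measure.restrict_apply hGo.measurableSet, inter_comm, ← Measure.restrict_apply hA] at h0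
    obtain ⟨h, hlsc, hint, hpolar⟩ := exists_isPolarWeight_of_null hp hμG hρ.measurable hρint hA h0
      fun x hx y hxy => ⟨x, hx, hxy⟩
    exact ⟨h, hlsc, hint, .inl hpolar⟩
  · rw [Measure.restrict_apply hGo.measurableSet, inter_comm,
      ← Measure.restrict_apply hA.compl] at h0
    obtain ⟨h, hlsc, hint, hpolar⟩ := exists_isPolarWeight_of_null hp hμG hρ.measurable hρint
      hA.compl h0 fun x hx y hxy ⟨e, he, hey⟩ => hno e he x hx (hey.trans hxy.symm)
    exact ⟨h, hlsc, hint, .inr hpolar⟩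

end Polar

/-! ### Coarse curves and test functions -/

/-- `γ`, restricted to `[0, L]`, is a `δ`-coarse curve from the set `D` to the point `x`: a
measurable map that is 1-Lipschitz up to the additive error `δ`. -/
structure IsCoarseCurve {X : Type*} [PseudoMetricSpace X] [MeasurableSpace X] (δ : ℝ) (D : Set X)
    (x : X) (L : ℝ) (γ : ℝ → X) : Prop where
  nonneg : 0 ≤ L
  measurable : Measurable γ
  source_mem : γ 0 ∈ D
  target_eq : γ L = x
  dist_le : ∀ s t, 0 ≤ s → s ≤ t → t ≤ L → dist (γ s) (γ t) ≤ t - s + δ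

/-- The `f`-weighted distance from the set `D` to the point `x` along `δ`-coarse curves,
truncated at `1`. Jumps of size `δ` cost nothing, which makes this a locally Lipschitz function of
`x` whenever `f` is bounded, even if no rectifiable curve joins `D` to `x`. -/
noncomputable def coarseDist {X : Type*} [PseudoMetricSpace X] [MeasurableSpace X] (D : Set X)
    (f : X → ℝ≥0∞) (δ : ℝ) (x : X) : ℝ≥0∞ :=
  min 1 (⨅ (L : ℝ) (γ : ℝ → X) (_ : IsCoarseCurve δ D x L γ), ∫⁻ t in Icc 0 L, f (γ t))

/-- The infimum of `h`, truncated at height `M`, over balls of radius `δ`. -/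
noncomputable def lowerEnvelope {X : Type*} [PseudoMetricSpace X] (h : X → ℝ≥0∞) (M : ℝ≥0∞)
    (δ : ℝ) (x : X) : ℝ≥0∞ :=
  ⨅ y ∈ ball x δ, min M (h y)

/-- `h` bounds the oscillation of `u` at scales up to `δ`: in every ball of radius `s ≤ δ`, the
distance of values of `u` to the value at the centre is at most `s * inf h`. -/
def HasOscillationBound {X : Type*} [PseudoMetricSpace X] (u : X → ℝ) (h : X → ℝ≥0∞) (δ : ℝ) :
    Prop :=
  ∀ x s, 0 < s → s ≤ δ → ∀ y ∈ ball x s, ∀ w ∈ ball x s,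
    edist (u y) (u x) ≤ h w * ENNReal.ofReal s

section LowerEnvelope

variable {X : Type*} [PseudoMetricSpace X] {h : X → ℝ≥0∞} {M : ℝ≥0∞} {δ : ℝ} {x y : X}

theorem lowerEnvelope_le (hxy : dist y x < δ) : lowerEnvelope h M δ x ≤ h y :=
  (iInf₂_le y hxy).trans (min_le_right _ _)

theorem lowerEnvelope_le_bound (hδ : 0 < δ) : lowerEnvelope h M δ x ≤ M :=
  (iInf₂_le x (mem_ball_self hδ)).trans (min_le_left _ _)

theorem upperSemicontinuous_lowerEnvelope : UpperSemicontinuous (lowerEnvelope h M δ) := by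
  refine upperSemicontinuous_iff_isOpen_preimage.2 fun c => ?_
  have heq : lowerEnvelope h M δ ⁻¹' Iio c = ⋃ y ∈ {y | min M (h y) < c}, ball y δ := by
    ext x
    simp only [lowerEnvelope, mem_preimage, mem_Iio, iInf_lt_iff, mem_iUnion, exists_prop,
      mem_ball_comm (x := x), mem_ofPred_eq, and_comm]
  exact heq ▸ isOpen_biUnion fun y _ => isOpen_ball

theorem le_liminf_lowerEnvelope (hlsc : LowerSemicontinuous h) {x : ℕ → X} {x₀ : X}
    (hx : Tendsto x atTop (𝓝 x₀)) {M : ℕ → ℝ≥0∞} (hM : Tendsto M atTop (𝓝 ⊤)) {δ : ℕ → ℝ}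
    (hδ : Tendsto δ atTop (𝓝 0)) :
    h x₀ ≤ liminf (fun k => lowerEnvelope h (M k) (δ k) (x k)) atTop := by
  refine le_of_forall_lt fun c hc => ?_
  obtain ⟨c', hcc', hc'⟩ := exists_between hc
  obtain ⟨η, hη, hball⟩ := Metric.eventually_nhds_iff.1 (hlsc x₀ c' hc')
  refine hcc'.trans_le (le_liminf_of_le (by isBoundedDefault) ?_)
  filter_upwards [Metric.tendsto_nhds.1 hx (η / 2) (half_pos hη),
    hδ.eventually_lt_const (half_pos hη), hM.eventually_const_lt (hc'.trans_le le_top)]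
    with k hxk hδk hMk
  refine le_iInf₂ fun y hy => le_min hMk.le (hball ?_).le
  calc dist y x₀ ≤ dist y (x k) + dist (x k) x₀ := dist_triangle _ _ _
    _ < η / 2 + η / 2 := add_lt_add ((mem_ball.1 hy).trans hδk) hxk
    _ = η := add_halves η

end LowerEnvelope

theorem IsCoarseCurve.extend {X : Type*} [PseudoMetricSpace X] [MeasurableSpace X] {D : Set X}
    {δ L : ℝ} {x y : X} {γ : ℝ → X} (hγ : IsCoarseCurve δ D x L γ) (hxy : 0 < dist x y)
    (hδ : dist x y ≤ δ) :
    IsCoarseCurve δ D y (L + dist x y) fun t => if t < L + dist x y then γ (min t L) else y where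
  nonneg := by linarith [hγ.nonneg]
  measurable := .ite measurableSet_Iio
    (hγ.measurable.comp (measurable_id.min measurable_const)) measurable_const
  source_mem := by
    simpa [add_pos_of_nonneg_of_pos hγ.nonneg hxy, min_eq_left hγ.nonneg] using hγ.source_mem
  target_eq := by simp
  dist_le s t hs hst ht := by
    have hmin {a b : ℝ} (ha : 0 ≤ a) (hab : a ≤ b) :
        dist (γ (min a L)) (γ (min b L)) ≤ min b L - min a L + δ :=
      hγ.dist_le _ _ (le_min ha hγ.nonneg) (min_le_min_right L hab) (min_le_right _ _)
    rcases lt_or_ge t (L + dist x y) with htL | htL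
    · rw [if_pos (hst.trans_lt htL), if_pos htL]
      refine (hmin hs hst).trans ?_
      rcases min_cases t L with h | h <;> rcases min_cases s L with h' | h' <;> linarith
    obtain rfl := ht.antisymm htL
    rw [if_neg (lt_irrefl _)]
    split_ifs with hsL
    · rcases le_total s L with hsL' | hsL'
      · have hsx := hγ.dist_le s L hs hsL' le_rfl
        rw [hγ.target_eq] at hsx
        rw [min_eq_left hsL']
        linarith [dist_triangle (γ s) x y]
      · rw [min_eq_right hsL', hγ.target_eq]
        linarith
    · rw [dist_self]
      linarith

section CoarseDist

variable {X : Type*} [PseudoMetricSpace X] [MeasurableSpace X] {D : Set X} {f : X → ℝ≥0∞} {δ : ℝ}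
  {x y : X}

theorem coarseDist_le_one : coarseDist D f δ x ≤ 1 :=
  min_le_left _ _

theorem coarseDist_ne_top : coarseDist D f δ x ≠ ⊤ :=
  ne_top_of_le_ne_top one_ne_top coarseDist_le_one

theorem coarseDist_le_lintegral {L : ℝ} {γ : ℝ → X} (hγ : IsCoarseCurve δ D x L γ) :
    coarseDist D f δ x ≤ ∫⁻ t in Icc 0 L, f (γ t) :=
  (min_le_right _ _).trans (iInf_le_of_le L (iInf₂_le γ hγ))

theorem coarseDist_eq_zero_of_mem (hδ : 0 ≤ δ) (hx : x ∈ D) : coarseDist D f δ x = 0 := by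
  have hconst : IsCoarseCurve δ D x 0 fun _ => x :=
    ⟨le_rfl, measurable_const, hx, rfl, fun s t _ hst _ => by rw [dist_self]; linarith⟩
  simpa using coarseDist_le_lintegral (f := f) hconst

end CoarseDist

section CoarseDistVariation

variable {X : Type*} [MetricSpace X] [MeasurableSpace X] {D : Set X} {f : X → ℝ≥0∞} {δ : ℝ}
  {x y : X}

theorem coarseDist_le_add (hxy : dist x y ≤ δ) :
    coarseDist D f δ y ≤ coarseDist D f δ x + f x * edist x y := by
  rcases eq_or_ne x y with rfl | hne
  · simp
  conv_rhs => rw [coarseDist, ← min_add_add_right]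
  simp_rw [ENNReal.iInf_add]
  refine le_min (coarseDist_le_one.trans le_self_add)
    (le_iInf fun L => le_iInf₂ fun γ hγ => ?_)
  have hd := dist_pos.2 hne
  refine (coarseDist_le_lintegral (hγ.extend hd hxy)).trans
    ((setLIntegral_Icc_add_le _ hγ.nonneg (le_add_of_nonneg_right dist_nonneg)).trans_eq ?_)
  congr 1
  · refine setLIntegral_congr_fun measurableSet_Icc fun t ht => ?_
    simp only [if_pos (ht.2.trans_lt (lt_add_of_pos_right L hd)), min_eq_left ht.2]
  · calc _ = ∫⁻ _ in Ico L (L + dist x y), f x := by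
          rw [← setLIntegral_congr Ico_ae_eq_Icc]
          refine setLIntegral_congr_fun measurableSet_Ico fun t ht => ?_
          simp only [if_pos ht.2, min_eq_right ht.1, hγ.target_eq]
      _ = f x * edist x y := by rw [setLIntegral_const, Real.volume_Ico, edist_dist]; simp

theorem edist_toReal_le {a b e : ℝ≥0∞} (ha : a ≠ ⊤) (hb : b ≠ ⊤) (hab : a ≤ b + e)
    (hba : b ≤ a + e) : edist a.toReal b.toReal ≤ e := by
  rcases eq_or_ne e ⊤ with rfl | he
  · exact le_top
  rw [edist_dist, Real.dist_eq]
  refine ENNReal.ofReal_le_of_le_toReal (abs_sub_le_iff.2 ⟨?_, ?_⟩)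
  · rw [sub_le_iff_le_add', ← ENNReal.toReal_add hb he]
    exact ENNReal.toReal_mono (ENNReal.add_ne_top.2 ⟨hb, he⟩) hab
  · rw [sub_le_iff_le_add', ← ENNReal.toReal_add ha he]
    exact ENNReal.toReal_mono (ENNReal.add_ne_top.2 ⟨ha, he⟩) hba

theorem edist_toReal_coarseDist_le {c : ℝ≥0∞} (hxy : dist x y ≤ δ) (hx : f x ≤ c) (hy : f y ≤ c) :
    edist (coarseDist D f δ x).toReal (coarseDist D f δ y).toReal ≤ c * edist x y := by
  refine edist_toReal_le coarseDist_ne_top coarseDist_ne_top ?_ ?_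
  · refine (coarseDist_le_add (by rwa [dist_comm])).trans ?_
    rw [edist_comm y x]
    gcongr
  · refine (coarseDist_le_add hxy).trans ?_
    gcongr

theorem locallyLipschitz_toReal_coarseDist (hδ : 0 < δ) {M : ℝ≥0} (hf : ∀ x, f x ≤ M) :
    LocallyLipschitz fun x => (coarseDist D f δ x).toReal := fun x =>
  ⟨M, ball x (δ / 2), ball_mem_nhds x (half_pos hδ), fun y hy z hz =>
    edist_toReal_coarseDist_le ((dist_triangle_right y z x).trans
      (by linarith [mem_ball.1 hy, mem_ball.1 hz])) (hf y) (hf z)⟩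

theorem hasOscillationBound_toReal_coarseDist_lowerEnvelope (h : X → ℝ≥0∞) (M : ℝ≥0∞) :
    HasOscillationBound (fun x => (coarseDist D (lowerEnvelope h M δ) δ x).toReal) h (δ / 2) := by
  intro x s _ hsδ y hy w hw
  have hxy : edist y x ≤ ENNReal.ofReal s := by
    rw [edist_dist]
    exact ENNReal.ofReal_le_ofReal (mem_ball.1 hy).le
  rw [mem_ball] at hy hw
  have hx : lowerEnvelope h M δ x ≤ h w := lowerEnvelope_le (by linarith [@dist_nonneg _ _ w x])
  have hy : lowerEnvelope h M δ y ≤ h w := lowerEnvelope_le (by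
    linarith [dist_triangle_right w y x])
  refine (edist_toReal_coarseDist_le (by linarith [@dist_nonneg _ _ y x]) hy hx).trans ?_
  gcongr

end CoarseDistVariation

section Limit

variable {X : Type*} [PseudoMetricSpace X] [MeasurableSpace X] {D : Set X} {r : ℝ}

theorem exists_lipschitzWith_limit_of_isCoarseCurve (hr : 0 < r) (hV : IsCompact (cthickening r D))
    (hD : IsClosed D) {δ : ℕ → ℝ} (hδr : ∀ k, δ k ≤ r / 2) (hδ : Tendsto δ atTop (𝓝 0))
    {x : ℕ → X} {L : ℕ → ℝ} {γ : ℕ → ℝ → X} (hγ : ∀ k, IsCoarseCurve (δ k) D (x k) (L k) (γ k))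
    (hL : ∀ k, r / 2 ≤ L k) :
    ∃ σ : ℝ → X, LipschitzWith 1 σ ∧ (∀ t, σ t ∈ cthickening r D) ∧ σ 0 ∈ D ∧
      ∃ φ : ℕ → ℕ, StrictMono φ ∧
        ∀ t ∈ Icc 0 (r / 2), Tendsto (fun k => γ (φ k) t) atTop (𝓝 (σ t)) := by
  have h0r : (0 : ℝ) ≤ r / 2 := by positivity
  have hdist (k : ℕ) (s t : Icc 0 (r / 2)) :
      dist (γ k s) (γ k t) ≤ (1 : ℝ) * dist s t + δ k := by
    wlog hst : s ≤ t generalizing s t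
    · simpa only [dist_comm] using this t s (le_of_not_ge hst)
    have h := (hγ k).dist_le s t s.2.1 hst (t.2.2.trans (hL k))
    rwa [one_mul, dist_comm s t, Subtype.dist_eq, Real.dist_eq,
      abs_of_nonneg (sub_nonneg.2 (Subtype.coe_le_coe.2 hst))]
  have hmem (k : ℕ) (t : Icc 0 (r / 2)) : γ k t ∈ cthickening r D := by
    refine mem_cthickening_of_dist_le _ _ _ _ (hγ k).source_mem ?_
    have h := (hγ k).dist_le 0 t le_rfl t.2.1 (t.2.2.trans (hL k))
    rw [dist_comm]
    linarith [hδr k, t.2.2]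
  obtain ⟨σ, φ, hφ, hσV, hσ, hσL⟩ :=
    exists_subseq_tendsto_of_asymptotically_lipschitz hV hmem tendsto_const_nhds hδ hdist
  refine ⟨σ ∘ projIcc 0 (r / 2) h0r, ?_, fun t => hσV _, ?_, φ, hφ, fun t ht => ?_⟩
  · simpa using (LipschitzWith.of_dist_le_mul (K := 1) hσL).comp (LipschitzWith.projIcc h0r)
  · simpa using hD.mem_of_tendsto (hσ ⟨0, le_rfl, h0r⟩) (.of_forall fun k => (hγ _).source_mem)
  · simpa [projIcc_of_mem h0r ht] using hσ ⟨t, ht⟩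

theorem exists_one_le_coarseDist [OpensMeasurableSpace X] {G : Set X} (hr : 0 < r)
    (hV : IsCompact (cthickening r D)) (hVG : cthickening r D ⊆ G) (hD : IsClosed D)
    {h : X → ℝ≥0∞} (hlsc : LowerSemicontinuous h) (hpolar : IsPolarWeight h D G) :
    ∃ δ > 0, ∃ M : ℝ≥0, ∀ x, r ≤ infDist x D → 1 ≤ coarseDist D (lowerEnvelope h M δ) δ x := by
  by_contra! hcon
  let δ : ℕ → ℝ := fun k => r / 2 / (k + 1)
  have hδpos (k : ℕ) : 0 < δ k := by positivity
  have hδr (k : ℕ) : δ k ≤ r / 2 := div_le_self (by positivity) (by simp)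
  have hδ : Tendsto δ atTop (𝓝 0) := by
    simpa [δ, div_eq_mul_inv] using
      (tendsto_one_div_add_atTop_nhds_zero_nat (𝕜 := ℝ)).const_mul (r / 2)
  choose x hxr hx using fun k => hcon (δ k) (hδpos k) k
  simp only [coarseDist, min_lt_iff, lt_self_iff_false, false_or, iInf_lt_iff] at hx
  choose L γ hγ hcost using hx
  have hL (k : ℕ) : r / 2 ≤ L k := by
    have h := (hγ k).dist_le 0 (L k) le_rfl (hγ k).nonneg le_rfl
    rw [(hγ k).target_eq, dist_comm] at h
    linarith [hxr k, infDist_le_dist_of_mem (x := x k) (hγ k).source_mem, hδr k]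
  obtain ⟨σ, hσ, hσV, hσ0, φ, hφ, hlim⟩ :=
    exists_lipschitzWith_limit_of_isCoarseCurve hr hV hD hδr hδ hγ hL
  refine ENNReal.one_lt_top.not_ge ?_
  calc ⊤ = ∫⁻ t in Icc 0 (r / 2), h (σ t) :=
        (hpolar σ hσ (fun t => hVG (hσV t)) hσ0 _ (half_pos hr)).symm
    _ ≤ ∫⁻ t in Icc 0 (r / 2),
          liminf (fun k => lowerEnvelope h (φ k) (δ (φ k)) (γ (φ k) t)) atTop :=
        setLIntegral_mono' measurableSet_Icc fun t ht => le_liminf_lowerEnvelope hlsc (hlim t ht)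
          (ENNReal.tendsto_nat_nhds_top.comp hφ.tendsto_atTop) (hδ.comp hφ.tendsto_atTop)
    _ ≤ liminf (fun k => ∫⁻ t in Icc 0 (r / 2),
          lowerEnvelope h (φ k) (δ (φ k)) (γ (φ k) t)) atTop :=
        lintegral_liminf_le fun k =>
          upperSemicontinuous_lowerEnvelope.measurable.comp (hγ _).measurable
    _ ≤ 1 := liminf_le_of_frequently_le' <| .of_forall fun k =>
        (lintegral_mono_set (Icc_subset_Icc_right (hL _))).trans (by simpa using (hcost (φ k)).le)

end Limit

theorem exists_continuous_hasOscillationBound {X : Type*} [MetricSpace X] [MeasurableSpace X]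
    [OpensMeasurableSpace X] {D D' G : Set X} (hG : IsOpen G) (hGc : IsCompact (closure G))
    (hD : IsCompact D) (hDne : D.Nonempty) (hDG : D ⊆ G) (hD' : IsClosed D')
    (hDD' : Disjoint D D') {h : X → ℝ≥0∞} (hlsc : LowerSemicontinuous h)
    (hpolar : IsPolarWeight h D G) :
    ∃ u : X → ℝ, Continuous u ∧ (∀ x ∈ D, u x = 0) ∧ (∀ x ∈ D', u x = 1) ∧
      ∃ δ > 0, HasOscillationBound u h δ := by
  obtain ⟨r, hr, hrG⟩ := hD.exists_cthickening_subset_open (hG.inter hD'.isOpen_compl)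
    (subset_inter hDG hDD'.subset_compl_right)
  have hVG : cthickening r D ⊆ G := hrG.trans inter_subset_left
  have hV : IsCompact (cthickening r D) :=
    hGc.of_isClosed_subset isClosed_cthickening (hVG.trans subset_closure)
  obtain ⟨δ, hδ, M, hM⟩ := exists_one_le_coarseDist hr hV hVG hD.isClosed hlsc hpolar
  have hfar (x : X) (hx : x ∈ D') : r ≤ infDist x D := by
    by_contra! hlt
    obtain ⟨z, hz, hxz⟩ := (infDist_lt_iff hDne).1 hlt
    exact (hrG (mem_cthickening_of_dist_le _ _ _ _ hz hxz.le)).2 hx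
  refine ⟨fun x => (coarseDist D (lowerEnvelope h M δ) δ x).toReal,
    (locallyLipschitz_toReal_coarseDist hδ fun x => lowerEnvelope_le_bound hδ).continuous,
    fun x hx => by simp [coarseDist_eq_zero_of_mem hδ.le hx],
    fun x hx => by simp [coarseDist_le_one.antisymm (hM x (hfar x hx))],
    δ / 2, half_pos hδ, hasOscillationBound_toReal_coarseDist_lowerEnvelope h M⟩

/-! ### Codimension-one measure of level sets -/

/-- The codimension-1 spherical Hausdorff content of `A` at scale `δ`, whose supremum over `δ` is
`codimOneHausdorff`. -/
noncomputable def codimOneContent {X : Type*} [PseudoMetricSpace X] [MeasurableSpace X]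
    (μ : Measure X) (δ : ℝ) (A : Set X) : ℝ≥0∞ :=
  ⨅ (c : ℕ → X) (r : ℕ → ℝ) (_ : A ⊆ ⋃ i, ball (c i) (r i)) (_ : ∀ i, 0 < r i ∧ r i ≤ δ),
    ∑' i, μ (ball (c i) (r i)) / ENNReal.ofReal (r i)

/-- `A` has a countable cover, at scale `δ` and of total codimension-1 cost at most `c`, by balls
`ball x (R x)` with centres `x ∈ I`. Unlike the covers in `codimOneContent`, it may be finite. -/
def HasBallCover {X : Type*} [PseudoMetricSpace X] [MeasurableSpace X] (μ : Measure X) (δ : ℝ)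
    (A : Set X) (c : ℝ≥0∞) : Prop :=
  ∃ (I : Set X) (R : X → ℝ), I.Countable ∧ (∀ x ∈ I, 0 < R x ∧ R x ≤ δ) ∧
    A ⊆ ⋃ x ∈ I, ball x (R x) ∧ ∑' x : I, μ (ball x (R x)) / ENNReal.ofReal (R x) ≤ c

/-- There are balls of arbitrarily small radius and codimension-1 cost. They pad finite covers to
the infinite ones that `codimOneContent` asks for. -/
def HasThinBalls {X : Type*} [PseudoMetricSpace X] [MeasurableSpace X] (μ : Measure X) : Prop :=
  ∀ η : ℝ≥0∞, 0 < η → ∀ δ : ℝ, 0 < δ →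
    ∃ (x : X) (r : ℝ), 0 < r ∧ r ≤ δ ∧ μ (ball x r) / ENNReal.ofReal r < η

section Covers

variable {X : Type*} [PseudoMetricSpace X] [MeasurableSpace X] {μ : Measure X} {δ : ℝ}
  {A B : Set X} {c : ℝ≥0∞}

theorem codimOneHausdorff_mono (h : A ⊆ B) : codimOneHausdorff μ A ≤ codimOneHausdorff μ B :=
  iSup₂_mono fun _ _ => iInf₂_mono fun _ _ => le_iInf fun hcov => iInf_le _ (h.trans hcov)

theorem HasBallCover.mono_scale {δ' : ℝ} (h : HasBallCover μ δ A c) (hδ : δ ≤ δ') :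
    HasBallCover μ δ' A c :=
  let ⟨I, R, hI, hR, hcov, hsum⟩ := h
  ⟨I, R, hI, fun x hx => ⟨(hR x hx).1, (hR x hx).2.trans hδ⟩, hcov, hsum⟩

theorem HasBallCover.codimOneContent_le (h : HasBallCover μ δ A c) (hthin : HasThinBalls μ)
    (hδ : 0 < δ) : codimOneContent μ δ A ≤ c := by
  obtain ⟨I, R, hI, hR, hcov, hsum⟩ := h
  have := hI.to_subtype
  refine _root_.le_of_forall_pos_le_add fun ε hε => ?_
  obtain ⟨η, hη, hηε⟩ := ENNReal.exists_pos_sum_of_countable' hε.ne' ℕ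
  choose z s hs hsδ hsη using fun i => hthin (η i) (hη i) δ hδ
  obtain ⟨_⟩ := nonempty_denumerable (I ⊕ ℕ)
  let e : ℕ ≃ I ⊕ ℕ := (Denumerable.eqv (I ⊕ ℕ)).symm
  let center : I ⊕ ℕ → X := Sum.elim (fun x => x) z
  let radius : I ⊕ ℕ → ℝ := Sum.elim (fun x => R x) s
  have hcov' : A ⊆ ⋃ i, ball (center (e i)) (radius (e i)) := fun y hy => by
    obtain ⟨x, hx, hyx⟩ := mem_iUnion₂.1 (hcov hy)
    exact mem_iUnion.2 ⟨e.symm (.inl ⟨x, hx⟩), by simpa [center, radius] using hyx⟩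
  have hradius (j : I ⊕ ℕ) : 0 < radius j ∧ radius j ≤ δ :=
    j.casesOn (fun x => hR x x.2) fun i => ⟨hs i, hsδ i⟩
  calc codimOneContent μ δ A
      ≤ ∑' i, μ (ball (center (e i)) (radius (e i))) / ENNReal.ofReal (radius (e i)) :=
        iInf₂_le_of_le _ _ (iInf₂_le_of_le hcov' (fun i => hradius (e i)) le_rfl)
    _ = ∑' j, μ (ball (center j) (radius j)) / ENNReal.ofReal (radius j) :=
        e.tsum_eq fun j => μ (ball (center j) (radius j)) / ENNReal.ofReal (radius j)
    _ = ∑' x : I, μ (ball x (R x)) / ENNReal.ofReal (R x) +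
          ∑' i, μ (ball (z i) (s i)) / ENNReal.ofReal (s i) :=
        ENNReal.summable.tsum_sum ENNReal.summable
    _ ≤ c + ε := add_le_add hsum ((ENNReal.tsum_le_tsum fun i => (hsη i).le).trans hηε.le)

theorem codimOneHausdorff_le_liminf {ψ : ℕ → ℝ≥0∞} {δ : ℕ → ℝ} (hthin : HasThinBalls μ)
    (hδ : Tendsto δ atTop (𝓝 0)) (h : ∀ n, HasBallCover μ (δ n) A (ψ n)) :
    codimOneHausdorff μ A ≤ liminf ψ atTop :=
  iSup₂_le fun d hd => le_liminf_of_le (by isBoundedDefault) <|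
    (hδ.eventually_le_const hd).mono fun n hn =>
      ((h n).mono_scale hn).codimOneContent_le hthin hd

theorem IsDoublingWith.measure_ball_six_mul_le {Cμ : ℝ} (hD : IsDoublingWith μ Cμ) (x : X)
    {r : ℝ} (hr : 0 < r) : μ (ball x (6 * r)) ≤ ENNReal.ofReal Cμ ^ 3 * μ (ball x r) := by
  calc μ (ball x (6 * r)) ≤ μ (ball x (2 * (2 * (2 * r)))) :=
        measure_mono (ball_subset_ball (by linarith))
    _ ≤ ENNReal.ofReal Cμ * μ (ball x (2 * (2 * r))) := (hD x _ (by positivity)).2.1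
    _ ≤ ENNReal.ofReal Cμ * (ENNReal.ofReal Cμ * μ (ball x (2 * r))) := by
        gcongr; exact (hD x _ (by positivity)).2.1
    _ ≤ ENNReal.ofReal Cμ * (ENNReal.ofReal Cμ * (ENNReal.ofReal Cμ * μ (ball x r))) := by
        gcongr; exact (hD x _ hr).2.1
    _ = ENNReal.ofReal Cμ ^ 3 * μ (ball x r) := by ring

variable [OpensMeasurableSpace X] {U : Set X}

theorem exists_pairwiseDisjoint_closedBall_subset_iUnion_ball [μ.IsOpenPosMeasure]
    (hU : IsOpen U) (hμU : μ U ≠ ⊤) (hδ : 0 < δ) :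
    ∃ (I : Set X) (r : X → ℝ), I.Countable ∧ (∀ x ∈ I, 0 < r x ∧ 6 * r x ≤ δ) ∧
      (∀ x ∈ I, closedBall x (r x) ⊆ U) ∧ I.PairwiseDisjoint (fun x => closedBall x (r x)) ∧
      U ⊆ ⋃ x ∈ I, ball x (6 * r x) := by
  have hr (x : X) (hx : x ∈ U) : ∃ r : ℝ, (0 < r ∧ 6 * r ≤ δ) ∧ closedBall x r ⊆ U := by
    obtain ⟨e, he, heU⟩ := nhds_basis_closedBall.mem_iff.1 (hU.mem_nhds hx)
    exact ⟨min e (δ / 6), ⟨by positivity, by linarith [min_le_right e (δ / 6)]⟩,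
      (closedBall_subset_closedBall (min_le_left _ _)).trans heU⟩
  choose! r hr hrU using hr
  obtain ⟨I, hIU, hdisj, hcov⟩ := Vitali.exists_disjoint_subfamily_covering_enlargement_closedBall
    U id r δ (fun x hx => by linarith [hr x hx]) 5 (by norm_num)
  refine ⟨I, r, ?_, fun x hx => hr x (hIU hx), fun x hx => hrU x (hIU hx), hdisj, fun x hx => ?_⟩
  · have hpos : {x : I | 0 < μ (closedBall (x : X) (r x))} = univ := eq_univ_of_forall fun x =>
      measure_closedBall_pos μ _ (hr x (hIU x.2)).1
    rw [← countable_coe_iff, ← countable_univ_iff, ← hpos]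
    exact Measure.countable_meas_pos_of_disjoint_of_meas_iUnion_ne_top μ
      (fun x => measurableSet_closedBall) (hdisj.subtype _ _)
      (measure_ne_top_of_subset (iUnion_subset fun x => hrU x (hIU x.2)) hμU)
  · obtain ⟨b, hb, hxb⟩ := hcov x hx
    exact mem_iUnion₂.2 ⟨b, hb, closedBall_subset_ball (by linarith [(hr b (hIU hb)).1])
      (hxb (mem_closedBall_self (hr x hx).1.le))⟩

end Covers

section Coarea

variable {X : Type*} [PseudoMetricSpace X] {u : X → ℝ} {h : X → ℝ≥0∞} {δ : ℝ}

theorem HasOscillationBound.mem_closedEBall (hu : HasOscillationBound u h δ) {x y : X} {s : ℝ}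
    (hs : 0 < s) (hsδ : s ≤ δ) (hy : y ∈ ball x s) :
    u y ∈ closedEBall (u x) ((⨅ w ∈ ball x s, h w) * ENNReal.ofReal s) := by
  have hs' : ENNReal.ofReal s ≠ 0 := by simpa using hs
  rw [Metric.mem_closedEBall, ← ENNReal.div_le_iff hs' ofReal_ne_top]
  exact le_iInf₂ fun w hw => ENNReal.div_le_of_le_mul (hu x s hs hsδ y hy w hw)

variable [MeasurableSpace X] [OpensMeasurableSpace X] {μ : Measure X} {Cμ : ℝ}

theorem iInf_ball_mul_measure_le_setLIntegral (h : X → ℝ≥0∞) (x : X) {r s : ℝ} (hrs : r ≤ s) :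
    (⨅ w ∈ ball x s, h w) * μ (ball x r) ≤ ∫⁻ y in closedBall x r, h y ∂μ := by
  rw [← setLIntegral_const]
  exact (setLIntegral_mono' measurableSet_ball fun y hy =>
    iInf₂_le y (ball_subset_ball hrs hy)).trans (lintegral_mono_set ball_subset_closedBall)

theorem IsDoublingWith.div_mul_volume_closedEBall_le (hD : IsDoublingWith μ Cμ)
    (h : X → ℝ≥0∞) (a : ℝ) (x : X) {r : ℝ} (hr : 0 < r) :
    μ (ball x (6 * r)) / ENNReal.ofReal (6 * r) *
        volume (closedEBall a ((⨅ w ∈ ball x (6 * r), h w) * ENNReal.ofReal (6 * r))) ≤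
      2 * ENNReal.ofReal Cμ ^ 3 * ∫⁻ y in closedBall x r, h y ∂μ := by
  have hr' : ENNReal.ofReal (6 * r) ≠ 0 := by simpa using hr
  set m := ⨅ w ∈ ball x (6 * r), h w
  calc μ (ball x (6 * r)) / ENNReal.ofReal (6 * r) *
        volume (closedEBall a (m * ENNReal.ofReal (6 * r)))
      = 2 * m * (ENNReal.ofReal (6 * r) * (μ (ball x (6 * r)) / ENNReal.ofReal (6 * r))) := by
        rw [Real.volume_closedEBall]; ring
    _ = 2 * m * μ (ball x (6 * r)) := by rw [ENNReal.mul_div_cancel hr' ofReal_ne_top]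
    _ ≤ 2 * m * (ENNReal.ofReal Cμ ^ 3 * μ (ball x r)) := by
        gcongr; exact hD.measure_ball_six_mul_le x hr
    _ = 2 * ENNReal.ofReal Cμ ^ 3 * (m * μ (ball x r)) := by ring
    _ ≤ 2 * ENNReal.ofReal Cμ ^ 3 * ∫⁻ y in closedBall x r, h y ∂μ := by
        gcongr; exact iInf_ball_mul_measure_le_setLIntegral h x (by linarith)

/-- A ball of a Vitali cover of `U` meets only levels of `u` in an interval whose length is
controlled by the radius times the infimum of `h`. Integrating over `t` the cost of the balls whose
interval contains `t` thus gives a lower Riemann-type sum for `∫ h`. -/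
theorem exists_hasBallCover_levelSet (hD : IsDoublingWith μ Cμ) {U : Set X} (hU : IsOpen U)
    (hμU : μ U ≠ ⊤) (hδ : 0 < δ) (hu : HasOscillationBound u h δ) {δ' : ℝ} (hδ' : 0 < δ') :
    ∃ Ψ : ℝ → ℝ≥0∞, Measurable Ψ ∧
      ∫⁻ t, Ψ t ≤ 2 * ENNReal.ofReal Cμ ^ 3 * ∫⁻ x in U, h x ∂μ ∧
      ∀ t, HasBallCover μ δ' (U ∩ u ⁻¹' {t}) (Ψ t) := by
  have := hD.isOpenPosMeasure
  obtain ⟨I, r, hI, hr, hrU, hdisj, hcov⟩ :=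
    exists_pairwiseDisjoint_closedBall_subset_iUnion_ball hU hμU (lt_min hδ hδ')
  have := hI.to_subtype
  let J : X → Set ℝ := fun x =>
    closedEBall (u x) ((⨅ w ∈ ball x (6 * r x), h w) * ENNReal.ofReal (6 * r x))
  have hJ (x : X) : MeasurableSet (J x) := isClosed_closedEBall.measurableSet
  let cost : X → ℝ≥0∞ := fun x => μ (ball x (6 * r x)) / ENNReal.ofReal (6 * r x)
  have hmeas (x : I) : Measurable ((J x).indicator fun _ => cost x) :=
    measurable_const.indicator (hJ x)
  refine ⟨fun t => ∑' x : I, (J x).indicator (fun _ => cost x) t, .tsum hmeas, ?_, fun t =>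
    ⟨{x ∈ I | t ∈ J x}, fun x => 6 * r x, hI.mono (sep_subset _ _), ?_, ?_, ?_⟩⟩
  · calc ∫⁻ t, ∑' x : I, (J x).indicator (fun _ => cost x) t
        = ∑' x : I, cost x * volume (J x) := by
          rw [lintegral_tsum fun x => (hmeas x).aemeasurable]
          simp only [lintegral_indicator_const (hJ _)]
      _ ≤ ∑' x : I, 2 * ENNReal.ofReal Cμ ^ 3 * ∫⁻ y in closedBall (x : X) (r x), h y ∂μ :=
          ENNReal.tsum_le_tsum fun x => hD.div_mul_volume_closedEBall_le h _ _ (hr x x.2).1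
      _ = 2 * ENNReal.ofReal Cμ ^ 3 * ∫⁻ y in ⋃ x : I, closedBall (x : X) (r x), h y ∂μ := by
          rw [ENNReal.tsum_mul_left,
            ← lintegral_iUnion (fun x => measurableSet_closedBall) (hdisj.subtype _ _)]
      _ ≤ 2 * ENNReal.ofReal Cμ ^ 3 * ∫⁻ x in U, h x ∂μ := by
          gcongr; exact iUnion_subset fun x => hrU x x.2
  · exact fun x ⟨hx, _⟩ => ⟨by linarith [hr x hx], (hr x hx).2.trans (min_le_right _ _)⟩
  · rintro y ⟨hyU, rfl : u y = t⟩
    obtain ⟨x, hx, hyx⟩ := mem_iUnion₂.1 (hcov hyU)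
    exact mem_iUnion₂.2 ⟨x, ⟨hx, hu.mem_closedEBall (by linarith [hr x hx])
      ((hr x hx).2.trans (min_le_left _ _)) hyx⟩, hyx⟩
  · refine ((tsum_subtype {x ∈ I | t ∈ J x} cost).trans (tsum_congr fun x => ?_)).trans
      (tsum_subtype I fun x => (J x).indicator (fun _ => cost x) t).symm |>.le
    by_cases hx : x ∈ I <;> by_cases ht : t ∈ J x <;> simp [hx, ht]

theorem exists_codimOneHausdorff_levelSet_le (hD : IsDoublingWith μ Cμ) (hthin : HasThinBalls μ)
    {U : Set X} (hU : IsOpen U) (hμU : μ U ≠ ⊤) (hδ : 0 < δ) (hu : HasOscillationBound u h δ) :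
    ∃ ψ : ℝ → ℝ≥0∞, Measurable ψ ∧
      ∫⁻ t, ψ t ≤ 2 * ENNReal.ofReal Cμ ^ 3 * ∫⁻ x in U, h x ∂μ ∧
      ∀ t, codimOneHausdorff μ (U ∩ u ⁻¹' {t}) ≤ ψ t := by
  choose Ψ hΨ hΨint hcov using fun n : ℕ =>
    exists_hasBallCover_levelSet hD hU hμU hδ hu (δ' := 1 / ((n : ℝ) + 1)) (by positivity)
  refine ⟨fun t => liminf (fun n => Ψ n t) atTop, .liminf hΨ, ?_, fun t =>
    codimOneHausdorff_le_liminf hthin tendsto_one_div_add_atTop_nhds_zero_nat fun n => hcov n t⟩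
  exact (lintegral_liminf_le hΨ).trans (liminf_le_of_frequently_le' (.of_forall hΨint))

end Coarea

section CodimIntegral

variable {X : Type*} [PseudoMetricSpace X] [MeasurableSpace X] {μ : Measure X}

theorem codimIntegral_mono (μ : Measure X) (A : Set X) {f g : X → ℝ≥0∞} (hfg : f ≤ g) :
    codimIntegral μ A f ≤ codimIntegral μ A g :=
  lintegral_mono fun _ => codimOneHausdorff_mono <|
    inter_subset_inter_right _ fun x hx => lt_of_lt_of_le hx (hfg x)

theorem codimOneHausdorff_le_codimIntegral (μ : Measure X) {A : Set X} {g : X → ℝ≥0∞}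
    (hg : ∀ x ∈ A, 1 ≤ g x) : codimOneHausdorff μ A ≤ codimIntegral μ A g := by
  calc codimOneHausdorff μ A = ∫⁻ _ in Ioo (0 : ℝ) 1, codimOneHausdorff μ A := by simp
    _ ≤ ∫⁻ s in Ioo (0 : ℝ) 1, codimOneHausdorff μ (A ∩ {x | ENNReal.ofReal s < g x}) :=
        setLIntegral_mono' measurableSet_Ioo fun s hs => codimOneHausdorff_mono fun x hx =>
          ⟨hx, (ENNReal.ofReal_lt_one.2 hs.2).trans_le (hg x hx)⟩
    _ ≤ codimIntegral μ A g := lintegral_mono_set Ioo_subset_Ioi_self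

theorem codimIntegral_le_tsum (μ : Measure X) (A : Set X) (g : X → ℝ≥0∞) :
    codimIntegral μ A g ≤ ∑' n : ℕ, codimOneHausdorff μ (A ∩ {x | (n : ℝ≥0∞) < g x}) := by
  have hsub : Ioi (0 : ℝ) ⊆ ⋃ n : ℕ, Ico (n : ℝ) (n + 1) := fun s hs =>
    mem_iUnion.2 ⟨⌊s⌋₊, Nat.floor_le (le_of_lt hs), Nat.lt_floor_add_one s⟩
  refine (lintegral_mono_set hsub).trans ((lintegral_iUnion_le _ _).trans
    (ENNReal.tsum_le_tsum fun n => ?_))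
  calc ∫⁻ s in Ico (n : ℝ) (n + 1), codimOneHausdorff μ (A ∩ {x | ENNReal.ofReal s < g x})
      ≤ ∫⁻ _ in Ico (n : ℝ) (n + 1), codimOneHausdorff μ (A ∩ {x | (n : ℝ≥0∞) < g x}) :=
        setLIntegral_mono' measurableSet_Ico fun s hs => codimOneHausdorff_mono <|
          inter_subset_inter_right _ fun x hx => lt_of_le_of_lt
            (ENNReal.ofReal_natCast n ▸ ENNReal.ofReal_le_ofReal hs.1) hx
    _ = codimOneHausdorff μ (A ∩ {x | (n : ℝ≥0∞) < g x}) := by simp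

end CodimIntegral

theorem tsum_ite_natCast_lt_le_add_one (a : ℝ≥0∞) :
    ∑' n : ℕ, (if (n : ℝ≥0∞) < a then (1 : ℝ≥0∞) else 0) ≤ a + 1 := by
  induction a with
  | top => simp
  | coe a =>
    have hlt (n : ℕ) : (n : ℝ≥0∞) < a ↔ n < ⌈a⌉₊ := by rw [Nat.lt_ceil]; norm_cast
    simp only [hlt]
    rw [tsum_eq_sum (s := Finset.range ⌈a⌉₊) fun n hn => by simpa using hn,
      Finset.sum_congr rfl fun n hn => if_pos (Finset.mem_range.1 hn)]
    simpa using mod_cast (Nat.ceil_lt_add_one (zero_le (a := a))).le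

theorem tsum_setLIntegral_natCast_lt_le {X : Type*} [MeasurableSpace X] (ν : Measure X)
    {h k : X → ℝ≥0∞} (hh : Measurable h) (hk : Measurable k) :
    ∑' n : ℕ, ∫⁻ x in {x | (n : ℝ≥0∞) < k x}, h x ∂ν ≤ ∫⁻ x, h x * (k x + 1) ∂ν := by
  have hmeas (n : ℕ) : MeasurableSet {x | (n : ℝ≥0∞) < k x} := measurableSet_lt measurable_const hk
  calc ∑' n : ℕ, ∫⁻ x in {x | (n : ℝ≥0∞) < k x}, h x ∂ν
      = ∑' n : ℕ, ∫⁻ x, h x * (if (n : ℝ≥0∞) < k x then 1 else 0) ∂ν := by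
        refine tsum_congr fun n => ?_
        rw [← lintegral_indicator (hmeas n)]
        simp [indicator_apply]
    _ = ∫⁻ x, h x * ∑' n : ℕ, (if (n : ℝ≥0∞) < k x then 1 else 0) ∂ν := by
        simp only [← ENNReal.tsum_mul_left]
        exact (lintegral_tsum fun n =>
          (hh.mul (.ite (hmeas n) measurable_const measurable_const)).aemeasurable).symm
    _ ≤ ∫⁻ x, h x * (k x + 1) ∂ν := by
        gcongr with x; exact tsum_ite_natCast_lt_le_add_one (k x)

theorem exists_mem_Ioo_le_lintegral {ψ : ℝ → ℝ≥0∞} (hψ : Measurable ψ) :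
    ∃ t ∈ Ioo (0 : ℝ) 1, ψ t ≤ ∫⁻ s, ψ s := by
  obtain ⟨t, ht, hle⟩ := exists_le_setLAverage (μ := volume) (s := Ioo (0 : ℝ) 1) (by simp)
    (by simp) hψ.aemeasurable
  refine ⟨t, ht, hle.trans ?_⟩
  simpa [setLAverage_eq] using setLIntegral_le_lintegral _ ψ

section WeightedCoarea

variable {X : Type*} [PseudoMetricSpace X] [MeasurableSpace X] [OpensMeasurableSpace X]
  {μ : Measure X} {Cμ : ℝ} {U : Set X} {h : X → ℝ≥0∞}

theorem hasThinBalls_of_forall_hasOscillationBound (hD : IsDoublingWith μ Cμ) (hU : IsOpen U)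
    (hμU : μ U ≠ ⊤) (hint : ∫⁻ x in U, h x ∂μ ≠ ⊤)
    (hfun : ∀ ε : ℝ≥0, 0 < ε → ∃ u : X → ℝ, Ioo 0 1 ⊆ u '' U ∧
      ∃ δ > 0, HasOscillationBound u (fun x => ε * h x) δ) : HasThinBalls μ := by
  intro η hη δ' hδ'
  obtain ⟨ε, hε, hlt⟩ := ENNReal.exists_nnreal_pos_mul_lt
    (a := 2 * ENNReal.ofReal Cμ ^ 3 * ∫⁻ x in U, h x ∂μ) (by finiteness) hη.ne'
  obtain ⟨u, hu, δ, hδ, hosc⟩ := hfun ε hε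
  obtain ⟨Ψ, hΨ, hΨint, hcov⟩ := exists_hasBallCover_levelSet hD hU hμU hδ hosc hδ'
  obtain ⟨t, ht, hΨt⟩ := exists_mem_Ioo_le_lintegral hΨ
  obtain ⟨I, R, -, hR, hsub, hsum⟩ := hcov t
  obtain ⟨y, hy, hyt⟩ := hu ht
  obtain ⟨x, hx, -⟩ := mem_iUnion₂.1 (hsub ⟨hy, hyt⟩)
  refine ⟨x, R x, (hR x hx).1, (hR x hx).2, ?_⟩
  calc μ (ball x (R x)) / ENNReal.ofReal (R x) ≤ Ψ t :=
        (ENNReal.le_tsum (f := fun x : I => μ (ball x (R x)) / ENNReal.ofReal (R x))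
          ⟨x, hx⟩).trans hsum
    _ ≤ 2 * ENNReal.ofReal Cμ ^ 3 * ∫⁻ x in U, ε * h x ∂μ := hΨt.trans hΨint
    _ = ε * (2 * ENNReal.ofReal Cμ ^ 3 * ∫⁻ x in U, h x ∂μ) := by
        rw [lintegral_const_mul' _ _ coe_ne_top, mul_left_comm]
    _ < η := hlt

theorem exists_codimIntegral_levelSet_le (hD : IsDoublingWith μ Cμ) (hthin : HasThinBalls μ)
    (hU : IsOpen U) (hμU : μ U ≠ ⊤) {u : X → ℝ} {δ : ℝ} (hδ : 0 < δ)
    (hu : HasOscillationBound u h δ) (hh : Measurable h) {k : X → ℝ≥0∞}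
    (hk : LowerSemicontinuous k) :
    ∃ ψ : ℝ → ℝ≥0∞, Measurable ψ ∧
      ∫⁻ t, ψ t ≤ 2 * ENNReal.ofReal Cμ ^ 3 * ∫⁻ x in U, h x * (k x + 1) ∂μ ∧
      ∀ t, codimIntegral μ (U ∩ u ⁻¹' {t}) k ≤ ψ t := by
  have hV (n : ℕ) : IsOpen {x | (n : ℝ≥0∞) < k x} := hk.isOpen_preimage n
  choose ψ hψ hψint hle using fun n : ℕ => exists_codimOneHausdorff_levelSet_le hD hthin
    ((hV n).inter hU) (measure_ne_top_of_subset inter_subset_right hμU) hδ hu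
  refine ⟨fun t => ∑' n, ψ n t, .tsum hψ, ?_, fun t => ?_⟩
  · calc ∫⁻ t, ∑' n, ψ n t = ∑' n, ∫⁻ t, ψ n t := lintegral_tsum fun n => (hψ n).aemeasurable
      _ ≤ ∑' n : ℕ, 2 * ENNReal.ofReal Cμ ^ 3 *
            ∫⁻ x in {x | (n : ℝ≥0∞) < k x}, h x ∂μ.restrict U := by
          simp only [Measure.restrict_restrict (hV _).measurableSet]
          exact ENNReal.tsum_le_tsum hψint
      _ ≤ 2 * ENNReal.ofReal Cμ ^ 3 * ∫⁻ x in U, h x * (k x + 1) ∂μ := by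
          rw [ENNReal.tsum_mul_left]
          gcongr
          exact tsum_setLIntegral_natCast_lt_le _ hh hk.measurable
  · refine (codimIntegral_le_tsum μ _ k).trans (ENNReal.tsum_le_tsum fun n => ?_)
    refine (codimOneHausdorff_mono ?_).trans (hle n t)
    exact fun x ⟨⟨hxU, hxt⟩, hxk⟩ => ⟨⟨hxk, hxU⟩, hxt⟩

end WeightedCoarea

/-! ### Surfaces of small weighted measure -/

section SeparatesIn

variable {X : Type*} [TopologicalSpace X] {S D D' G : Set X}

theorem SeparatesIn.symm (h : SeparatesIn S D D' G) : SeparatesIn S D' D G :=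
  let ⟨x, hx, y, hy, hDx, hDy, hne⟩ := h
  ⟨y, hy, x, hx, hDy, hDx, hne.symm⟩

theorem separatesIn_levelSet (hD : IsConnected D) (hD' : IsConnected D') (hDG : D ⊆ G)
    (hD'G : D' ⊆ G) {u : X → ℝ} (hu : Continuous u) {a b t : ℝ} (hua : ∀ x ∈ D, u x = a)
    (hub : ∀ x ∈ D', u x = b) (ht : t ∈ Ioo a b) :
    SeparatesIn (closure G ∩ u ⁻¹' {t}) D D' G := by
  have hDS : D ⊆ G \ (closure G ∩ u ⁻¹' {t}) := fun x hx =>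
    ⟨hDG hx, fun h => ht.1.ne ((hua x hx).symm.trans h.2)⟩
  have hD'S : D' ⊆ G \ (closure G ∩ u ⁻¹' {t}) := fun x hx =>
    ⟨hD'G hx, fun h => ht.2.ne' ((hub x hx).symm.trans h.2)⟩
  obtain ⟨x, hx⟩ := hD.nonempty
  obtain ⟨y, hy⟩ := hD'.nonempty
  refine ⟨x, hDS hx, y, hD'S hy, hD.isPreconnected.subset_connectedComponentIn hx hDS,
    hD'.isPreconnected.subset_connectedComponentIn hy hD'S, fun heq => ?_⟩
  obtain ⟨z, hz, hzt⟩ := isPreconnected_connectedComponentIn.intermediate_value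
    (mem_connectedComponentIn (hDS hx)) (heq ▸ mem_connectedComponentIn (hD'S hy))
    hu.continuousOn (show t ∈ Icc (u x) (u y) by
      rw [hua x hx, hub y hy]; exact Ioo_subset_Icc_self ht)
  obtain ⟨hzG, hzS⟩ := connectedComponentIn_subset _ _ hz
  exact hzS ⟨subset_closure hzG, hzt⟩

end SeparatesIn

theorem surfaceSets_comm {X : Type*} [PseudoMetricSpace X] [MeasurableSpace X] (μ : Measure X)
    (E F G : Set X) : surfaceSets μ E F G = surfaceSets μ F E G := by
  ext S
  exact and_congr_right' (and_congr_right' (and_congr_right' ⟨.symm, .symm⟩))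

section Holder

variable {X : Type*} [MeasurableSpace X] {ν : Measure X} [IsFiniteMeasure ν] {p q : ℝ}
  {f g : X → ℝ≥0∞}

theorem lintegral_add_one_rpow_ne_top (hp : 1 ≤ p) (hf : Measurable f)
    (hfp : ∫⁻ x, f x ^ p ∂ν ≠ ⊤) : ∫⁻ x, (f x + 1) ^ p ∂ν ≠ ⊤ :=
  (ENNReal.lintegral_rpow_add_lt_top_of_lintegral_rpow_lt_top hf.aemeasurable hfp.lt_top
    (by simp [measure_lt_top]) hp).ne

theorem lintegral_mul_add_one_ne_top (hpq : p.HolderConjugate q) (hf : Measurable f)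
    (hg : Measurable g) (hfp : ∫⁻ x, f x ^ p ∂ν ≠ ⊤) (hgq : ∫⁻ x, g x ^ q ∂ν ≠ ⊤) :
    ∫⁻ x, f x * (g x + 1) ∂ν ≠ ⊤ :=
  ne_top_of_le_ne_top
    (ENNReal.mul_ne_top
      (ENNReal.rpow_ne_top_of_nonneg (by simpa using hpq.nonneg) hfp)
      (ENNReal.rpow_ne_top_of_nonneg (by simpa using hpq.symm.nonneg)
        (lintegral_add_one_rpow_ne_top hpq.symm.lt.le hg hgq)))
    (ENNReal.lintegral_mul_le_Lp_mul_Lq ν hpq hf.aemeasurable (hg.add_const 1).aemeasurable)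

end Holder

theorem IsPolarWeight.const_mul {X : Type*} [PseudoMetricSpace X] {D G : Set X} {h : X → ℝ≥0∞}
    (hpolar : IsPolarWeight h D G) {c : ℝ≥0∞} (hc : c ≠ 0) :
    IsPolarWeight (fun x => c * h x) D G := fun γ hγ hγG h0 T hT => by
  refine top_le_iff.1 (le_trans ?_ (lintegral_const_mul_le _ _))
  rw [hpolar γ hγ hγG h0 T hT, ENNReal.mul_top hc]

section Surfaces

variable {X : Type*} [MetricSpace X] [MeasurableSpace X] [BorelSpace X] {D D' G : Set X}
  {h : X → ℝ≥0∞}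

theorem IsPolarWeight.exists_continuous_hasOscillationBound_const_mul
    (hpolar : IsPolarWeight h D G) (hG : IsDomainWithCompactClosure G) (hD : IsCompact D)
    (hDne : D.Nonempty) (hDG : D ⊆ G) (hD' : IsClosed D') (hDD' : Disjoint D D')
    (hlsc : LowerSemicontinuous h) {ε : ℝ≥0} (hε : 0 < ε) :
    ∃ u : X → ℝ, Continuous u ∧ (∀ x ∈ D, u x = 0) ∧ (∀ x ∈ D', u x = 1) ∧
      ∃ δ > 0, HasOscillationBound u (fun x => ε * h x) δ :=
  exists_continuous_hasOscillationBound hG.1 hG.2.2 hD hDne hDG hD' hDD'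
    ((ENNReal.continuous_const_mul coe_ne_top).comp_lowerSemicontinuous hlsc
      fun _ _ hab => mul_le_mul_right hab _)
    (hpolar.const_mul (by simpa using hε.ne'))

variable {μ : Measure X} {Cμ p q : ℝ}

theorem IsPolarWeight.hasThinBalls (hpolar : IsPolarWeight h D G) (hμ : IsDoublingWith μ Cμ)
    (hG : IsDomainWithCompactClosure G) (hμG : μ G ≠ ⊤) (hD : IsCompact D) (hDne : D.Nonempty)
    (hDG : D ⊆ G) (hD' : IsClosed D') (hD'ne : D'.Nonempty) (hD'G : D' ⊆ G)
    (hDD' : Disjoint D D') (hlsc : LowerSemicontinuous h) (hint : ∫⁻ x in G, h x ∂μ ≠ ⊤) :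
    HasThinBalls μ := by
  refine hasThinBalls_of_forall_hasOscillationBound hμ hG.1 hμG hint fun ε hε => ?_
  obtain ⟨u, hu, hu0, hu1, δ, hδ, hosc⟩ :=
    hpolar.exists_continuous_hasOscillationBound_const_mul hG hD hDne hDG hD' hDD' hlsc hε
  refine ⟨u, fun t ht => ?_, δ, hδ, hosc⟩
  obtain ⟨x, hx⟩ := hDne
  obtain ⟨y, hy⟩ := hD'ne
  exact hG.2.1.isPreconnected.intermediate_value (hDG hx) (hD'G hy) hu.continuousOn
    (by rw [hu0 x hx, hu1 y hy]; exact Ioo_subset_Icc_self ht)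

theorem IsPolarWeight.exists_mem_surfaceSets_codimIntegral_lt_one (hpolar : IsPolarWeight h D G)
    (hμ : IsDoublingWith μ Cμ) (hpq : p.HolderConjugate q) (hG : IsDomainWithCompactClosure G)
    (hμG : μ G ≠ ⊤) (hD : IsCompact D) (hDconn : IsConnected D) (hDG : D ⊆ G) (hD' : IsClosed D')
    (hD'conn : IsConnected D') (hD'G : D' ⊆ G) (hDD' : Disjoint D D')
    (hlsc : LowerSemicontinuous h) (hint : ∫⁻ x in G, h x ^ p ∂μ ≠ ⊤) {g : X → ℝ≥0∞}
    (hg : Measurable g) (hgint : ∫⁻ x in G, g x ^ q ∂μ ≠ ⊤) :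
    ∃ S ∈ surfaceSets μ D D' G, codimIntegral μ (S ∩ G) g < 1 := by
  have : IsFiniteMeasure (μ.restrict G) := isFiniteMeasure_restrict.2 hμG
  -- As `k` dominates both `1` and `g`, the bound `∫ k d𝓗 < 1` on a level set shows at once that
  -- the level set has finite measure and that `∫ g d𝓗 < 1`.
  obtain ⟨k, hk, hgk, hkint⟩ := exists_lowerSemicontinuous_ge_lintegral_rpow_ne_top hpq.symm.pos
    (hg.add_const 1) (lintegral_add_one_rpow_ne_top hpq.symm.lt.le hg hgint)
  have hthin : HasThinBalls μ := hpolar.hasThinBalls hμ hG hμG hD hDconn.nonempty hDG hD'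
    hD'conn.nonempty hD'G hDD' hlsc
    (by simpa using lintegral_rpow_ne_top_of_exponent_le zero_le_one hpq.lt.le hint)
  have hhk := lintegral_mul_add_one_ne_top hpq hlsc.measurable hk.measurable hint hkint
  obtain ⟨ε, hε, hlt⟩ := ENNReal.exists_nnreal_pos_mul_lt
    (a := 2 * ENNReal.ofReal Cμ ^ 3 * ∫⁻ x in G, h x * (k x + 1) ∂μ) (by finiteness) one_ne_zero
  obtain ⟨u, hu, hu0, hu1, δ, hδ, hosc⟩ := hpolar.exists_continuous_hasOscillationBound_const_mul
    hG hD hDconn.nonempty hDG hD' hDD' hlsc hε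
  obtain ⟨ψ, hψ, hψint, hle⟩ := exists_codimIntegral_levelSet_le hμ hthin hG.1 hμG hδ hosc
    (hlsc.measurable.const_mul _) hk
  obtain ⟨t, ht, hψt⟩ := exists_mem_Ioo_le_lintegral hψ
  have hSG : (closure G ∩ u ⁻¹' {t}) ∩ G = G ∩ u ⁻¹' {t} := by
    rw [inter_right_comm, inter_eq_right.2 subset_closure]
  have hsmall : codimIntegral μ (G ∩ u ⁻¹' {t}) k < 1 := by
    calc codimIntegral μ (G ∩ u ⁻¹' {t}) k
        ≤ 2 * ENNReal.ofReal Cμ ^ 3 * ∫⁻ x in G, ε * h x * (k x + 1) ∂μ :=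
          (hle t).trans (hψt.trans hψint)
      _ = ε * (2 * ENNReal.ofReal Cμ ^ 3 * ∫⁻ x in G, h x * (k x + 1) ∂μ) := by
          simp only [mul_assoc, lintegral_const_mul' _ _ (coe_ne_top (r := ε))]; ring
      _ < 1 := hlt
  refine ⟨closure G ∩ u ⁻¹' {t}, ⟨hG.2.2.inter_right (isClosed_singleton.preimage hu),
    inter_subset_left, ?_, separatesIn_levelSet hDconn hD'conn hDG hD'G hu hu0 hu1 ht⟩, ?_⟩
  · rw [hSG]
    exact ((codimOneHausdorff_le_codimIntegral μ fun x _ =>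
      le_add_self.trans (hgk x)).trans_lt hsmall).ne_top
  · rw [hSG]
    exact (codimIntegral_mono μ _ fun x => le_self_add.trans (hgk x)).trans_lt hsmall

end Surfaces

theorem surface_modulus_infinite_of_path_modulus_zero_general {X : Type*} [MetricSpace X]
    [MeasurableSpace X] [BorelSpace X] {μ : Measure X} {Cμ : ℝ} (hD : IsDoublingWith μ Cμ)
    {s CP lP : ℝ} (hs : 0 < s) (hlP : 0 < lP) (hPI : WeakPoincare μ s CP lP)
    {p : ℝ} (hp : 1 < p) (hsp : s ≤ p) {G E F : Set X} (hG : IsDomainWithCompactClosure G)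
    (hE : IsCompact E) (hEconn : IsConnected E) (hF : IsCompact F) (hFconn : IsConnected F)
    (hEG : E ⊆ G) (hFG : F ⊆ G) (hEF : Disjoint E F)
    (hmod : modulus μ p (pathFamily E F G) = 0) :
    surfModulus μ (p / (p - 1)) (surfaceSets μ E F G) G = ⊤ := by
  have := hD.isLocallyFiniteMeasure
  have hμG : μ G ≠ ⊤ := measure_ne_top_of_subset subset_closure hG.2.2.measure_lt_top.ne
  obtain ⟨h, hlsc, hint, hpolar⟩ :=
    exists_isPolarWeight hD hPI hlP hs hsp hG hμG hE.isClosed hEF hmod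
  refine iInf₂_eq_top.2 fun g ⟨hg, hadm⟩ => of_not_not fun hfin => ?_
  have hgint : ∫⁻ x in G, g x ^ (p / (p - 1)) ∂μ ≠ ⊤ :=
    ne_top_of_le_ne_top hfin (setLIntegral_le_lintegral _ _)
  have hpq : p.HolderConjugate (p / (p - 1)) := .conjExponent hp
  obtain ⟨S, hS, hlt⟩ : ∃ S ∈ surfaceSets μ E F G, codimIntegral μ (S ∩ G) g < 1 := by
    rcases hpolar with hpolar | hpolar
    · exact hpolar.exists_mem_surfaceSets_codimIntegral_lt_one hD hpq hG hμG hE hEconn hEG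
        hF.isClosed hFconn hFG hEF hlsc hint hg hgint
    · rw [surfaceSets_comm]
      exact hpolar.exists_mem_surfaceSets_codimIntegral_lt_one hD hpq hG hμG hF hFconn hFG
        hE.isClosed hEconn hEG hEF.symm hlsc hint hg hgint
  exact (hadm S hS).not_gt hlt

/-- If the path modulus vanishes, the dual surface modulus is infinite. -/
theorem surface_modulus_infinite_of_path_modulus_zero {X : Type*} [MetricSpace X]
    [MeasurableSpace X] [BorelSpace X] [CompleteSpace X] (μ : Measure X) (hBR : BorelRegular μ)
    (Cμ : ℝ) (hCμ : 1 < Cμ) (hD : IsDoublingWith μ Cμ)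
    (CP lP : ℝ) (hCP : 1 ≤ CP) (hlP : 1 ≤ lP) (hPI : WeakPoincare μ 1 CP lP)
    (p : ℝ) (hp : 1 < p) (G E F : Set X)
    (hG : IsDomainWithCompactClosure G) (hE : IsNondegContinuum E) (hF : IsNondegContinuum F)
    (hEG : E ⊆ G) (hFG : F ⊆ G) (hEF : Disjoint E F)
    (hmod : modulus μ p (pathFamily E F G) = 0) :
    surfModulus μ (p / (p - 1)) (surfaceSets μ E F G) G = ⊤ := by
  exact surface_modulus_infinite_of_path_modulus_zero_general hD one_pos (by linarith) hPI hp hp.le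
    hG hE.1 hE.2.1 hF.1 hF.2.1 hEG hFG hEF hmod
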